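/- arXiv:1710.01350 — 2 statements merged into one kernel-verified Lean document; each statement's English description precedes it below -/
import Mathlib

section
/- Suppose ν assigns a nonnegative real number ν(λ,b) to each pair consisting of a partition λ and an element b of G_λ = ⨁_i ℤ/p^{λ_i}ℤ, such that ν(λ, σ(b)) = ν(λ, b) for every automorphism σ of G_λ (so ν depends only on the isomorphism class of the pointed group (G_λ, b)). If for every finite abelian p-group A and every a ∈ A one has ∑_λ ∑_{b ∈ G_λ} ν(λ,b) · |Sur((G_λ,b),(A,a))| = 1/|A|, then ν(λ,b) = μ^0(G_λ)/|G_λ| for every λ and every b ∈ G_λ; that is, ν coincides with the pointed Cohen–Lenstra measure μ on isomorphism classes of pointed finite abelian p-groups. -/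
/-!
Cohen–Lenstra moments: for every integer `u ≥ 0` and every finite abelian `p`-group `A`,
the sum over isomorphism classes of finite abelian `p`-groups `B` of `|Sur(B,A)| · μ^u(B)`
equals `|A|^{-u}`.
-/

open scoped Classical

/-- The number of surjective group homomorphisms `B → A`. -/
noncomputable def numSur (B A : Type*) [AddCommGroup B] [AddCommGroup A] : ℕ :=
  Nat.card {f : B →+ A // Function.Surjective f}

/-- The number of automorphisms of `A`. -/
noncomputable def numAut (A : Type*) [AddCommGroup A] : ℕ :=
  Nat.card (A ≃+ A)

/-- The infinite product `∏_{k=1}^∞ (1 - p^{-(k+u)})`. -/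
noncomputable def clProd (p u : ℕ) : ℝ :=
  ∏' k : ℕ, (1 - (p : ℝ) ^ (-((k : ℤ) + 1 + u)))

/-- The Cohen–Lenstra measure `μ^u(A) = |A|^{-u} |Aut(A)|^{-1} ∏_{k=1}^∞ (1 - p^{-(k+u)})`. -/
noncomputable def clMeasure (p u : ℕ) (A : Type*) [AddCommGroup A] : ℝ :=
  ((Nat.card A : ℝ) ^ u)⁻¹ * ((numAut A : ℝ))⁻¹ * clProd p u

/-- The finite abelian `p`-group `G_λ = ⨁_i ℤ/p^{λ_i}ℤ` associated to a partition `λ`,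
a finite multiset of positive integers. -/
def CLGroup (p : ℕ) (lam : Multiset ℕ+) : Type :=
  ∀ i : Fin lam.toList.length, ZMod (p ^ ((lam.toList.get i : ℕ+) : ℕ))

noncomputable instance (p : ℕ) (lam : Multiset ℕ+) : AddCommGroup (CLGroup p lam) := by
  delta CLGroup; infer_instance

/-- The number of surjective group homomorphisms `B → A` sending `b` to `a`. -/
noncomputable def numPointedSur (B : Type*) [AddCommGroup B] (b : B)
    (A : Type*) [AddCommGroup A] (a : A) : ℕ :=
  Nat.card {f : B →+ A // Function.Surjective f ∧ f b = a}

/-!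
Give a surjection `K → 𝔽_p^k` the weight `w_k = ∏_{j=1}^k (1 - p^j)⁻¹`. By the `q`-binomial theorem
the total weight of all such surjections, over all `k`, is `1` if `K = 0` and `0` for every other
finite abelian `p`-group `K`. Applied to `K = ker φ`, this sieves the isomorphisms out of the
surjections `φ : (B, b) → (A, a)`.

For a finite abelian `p`-group `V`, the expected number of pairs of a surjection
`φ : (B, b) → (A, a)` and a surjection `ker φ → V` is `1 / |A|`. Indeed, write `A = F / R` with `F`
free. The surjections of `B` onto the pushouts of `0 → R → F → A → 0` along all `χ : R → V` that
send `b` into the fibre over `a` count each pair `|Hom(F, V)|` times. Each of the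
`|Hom(R, V)| = |Hom(F, V)|` values of `χ` contributes `1 / |A|` to the expectation.

Hence the expected number of isomorphisms `(B, b) ≅ (A, a)`, which is `ν(A, a) |Aut A|`, equals
`(∑ w_k) / |A|`, and `∑ w_k = ∏ (1 - p^{-j})` by Euler's identity.
-/
section QSeries

variable {q : ℝ}

/-- The weight `w_k = ∏_{j=1}^k (1 - q^j)⁻¹ = (-1)^k q^{k(k-1)/2} / |GL_k(𝔽_q)|`. Weighting the
surjections onto `𝔽_p^k` by `w_k` (with `q = p`) singles out the trivial group. -/
noncomputable def sieveWeight (q : ℝ) (k : ℕ) : ℝ :=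
  ∏ j ∈ Finset.range k, (1 - q ^ (j + 1))⁻¹

lemma sieveWeight_zero (q : ℝ) : sieveWeight q 0 = 1 := rfl

lemma sieveWeight_succ (q : ℝ) (k : ℕ) :
    sieveWeight q (k + 1) = sieveWeight q k * (1 - q ^ (k + 1))⁻¹ :=
  Finset.prod_range_succ _ _

lemma one_sub_pow_succ_ne_zero (hq : 1 < q) (k : ℕ) : 1 - q ^ (k + 1) ≠ 0 :=
  (sub_neg.2 (one_lt_pow₀ hq k.succ_ne_zero)).ne

lemma summable_sieveWeight_mul_pow (hq : 1 < q) (z : ℝ) :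
    Summable fun k => sieveWeight q k * z ^ k := by
  have hpow : Filter.Tendsto (fun k => q ^ (k + 1)) Filter.atTop Filter.atTop :=
    (tendsto_pow_atTop_atTop_of_one_lt hq).comp (Filter.tendsto_add_atTop_nat 1)
  have hratio : Filter.Tendsto (fun k => ‖(1 - q ^ (k + 1))⁻¹ * z‖) Filter.atTop (nhds 0) := by
    have hinv := (Filter.tendsto_atBot_add_const_left _ (1 : ℝ)
      (Filter.tendsto_neg_atTop_atBot.comp hpow)).inv_tendsto_atBot
    simpa [sub_eq_add_neg] using (hinv.mul_const z).norm
  refine summable_of_ratio_norm_eventually_le (r := 1 / 2) (by norm_num) ?_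
  filter_upwards [hratio.eventually_le_const (u := 1 / 2) (by norm_num)] with k hk
  calc ‖sieveWeight q (k + 1) * z ^ (k + 1)‖
      = ‖(1 - q ^ (k + 1))⁻¹ * z‖ * ‖sieveWeight q k * z ^ k‖ := by
        rw [← norm_mul, sieveWeight_succ, pow_succ]; congr 1; ring
    _ ≤ 1 / 2 * ‖sieveWeight q k * z ^ k‖ := by gcongr

lemma prod_mul_sub_pow_range_succ (q X : ℝ) (k : ℕ) :
    ∏ i ∈ Finset.range (k + 1), (q * X - q ^ i)
      = q ^ k * (∏ i ∈ Finset.range k, (X - q ^ i)) * (q * X - 1) := by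
  rw [Finset.prod_range_succ', pow_zero]
  simp_rw [pow_succ', ← mul_sub, Finset.prod_mul_distrib, Finset.prod_const, Finset.card_range]

-- Pascal's rule for the coefficients of the `q`-binomial theorem, with `X = q^d`.
lemma sieveWeight_mul_prod_succ (hq : 1 < q) (X : ℝ) (k : ℕ) :
    sieveWeight q (k + 1) * ∏ i ∈ Finset.range (k + 1), (q * X - q ^ i)
      = sieveWeight q (k + 1) * (∏ i ∈ Finset.range (k + 1), (X - q ^ i)) * q ^ (k + 1)
        - sieveWeight q k * (∏ i ∈ Finset.range k, (X - q ^ i)) * q ^ k := by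
  have hne := one_sub_pow_succ_ne_zero hq k
  rw [prod_mul_sub_pow_range_succ, Finset.prod_range_succ, sieveWeight_succ]
  field_simp
  ring

theorem hasSum_qBinomial (hq : 1 < q) (d : ℕ) (z : ℝ) :
    HasSum (fun k => sieveWeight q k * (∏ i ∈ Finset.range k, (q ^ d - q ^ i)) * z ^ k)
      (∏ i ∈ Finset.range d, (1 - z * q ^ i)) := by
  induction d generalizing z with
  | zero =>
    convert hasSum_single (f := fun k => sieveWeight q k *
      (∏ i ∈ Finset.range k, (q ^ 0 - q ^ i)) * z ^ k) 0 fun k hk => ?_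
    · simp [sieveWeight_zero]
    · simp [Finset.prod_eq_zero (Finset.mem_range.2 (Nat.pos_of_ne_zero hk))]
  | succ d ih =>
    have hS := ih (q * z)
    have hshift := ((hasSum_nat_add_iff' 1).2 hS).sub (hS.mul_left z)
    rw [← hasSum_nat_add_iff' 1]
    convert hshift using 1
    · ext k
      rw [pow_succ' q d, sieveWeight_mul_prod_succ hq]
      ring
    · simp only [Finset.prod_range_succ', pow_succ', Finset.sum_range_one, Finset.prod_range_zero,
        sieveWeight_zero, pow_zero, mul_one, mul_assoc, mul_left_comm z]
      ring

lemma hasSum_sieveWeight_mul_prod (hq : 1 < q) (d : ℕ) :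
    HasSum (fun k => sieveWeight q k * ∏ i ∈ Finset.range k, (q ^ d - q ^ i))
      (if d = 0 then 1 else 0) := by
  have h := hasSum_qBinomial hq d 1
  simp only [one_pow, mul_one, one_mul] at h
  convert h using 1
  cases d with
  | zero => simp
  | succ d => simp [Finset.prod_range_succ']

lemma prod_one_sub_pow_mul_inv_pow_mem_Icc (hq : 1 < q) (d k : ℕ) :
    ∏ i ∈ Finset.range k, (1 - q ^ i * q⁻¹ ^ d) ∈ Set.Icc (0 : ℝ) 1 := by
  have hq0 : 0 < q := one_pos.trans hq
  rcases lt_or_ge d k with hdk | hkd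
  · rw [Finset.prod_eq_zero (Finset.mem_range.2 hdk)]
    · simp
    · rw [← mul_pow, mul_inv_cancel₀ hq0.ne', one_pow, sub_self]
  · have hle : ∀ i ∈ Finset.range k, q ^ i * q⁻¹ ^ d ≤ 1 := fun i hi => by
      rw [inv_pow, ← div_eq_mul_inv, div_le_one (by positivity)]
      exact pow_le_pow_right₀ hq.le ((Finset.mem_range.1 hi).le.trans hkd)
    exact ⟨Finset.prod_nonneg fun i hi => sub_nonneg.2 (hle i hi),
      Finset.prod_le_one (fun i hi => sub_nonneg.2 (hle i hi))
        fun i _ => sub_le_self _ (by positivity)⟩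

-- The `q`-binomial theorem at `z / q ^ d`, with the factors on the right in reverse order.
lemma hasSum_qBinomial_mul_inv_pow (hq : 1 < q) (d : ℕ) (z : ℝ) :
    HasSum (fun k => sieveWeight q k * z ^ k * ∏ i ∈ Finset.range k, (1 - q ^ i * q⁻¹ ^ d))
      (∏ i ∈ Finset.range d, (1 - z * q⁻¹ ^ (i + 1))) := by
  have hq0 : q ≠ 0 := (one_pos.trans hq).ne'
  convert hasSum_qBinomial hq d (z * q⁻¹ ^ d) using 1
  · ext k
    have hfactor : ∀ i, 1 - q ^ i * q⁻¹ ^ d = (q ^ d - q ^ i) * q⁻¹ ^ d := fun i => by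
      rw [sub_mul, ← mul_pow q, mul_inv_cancel₀ hq0, one_pow]
    simp_rw [hfactor, Finset.prod_mul_distrib, Finset.prod_const, Finset.card_range]
    ring
  · rw [← Finset.prod_range_reflect]
    refine Finset.prod_congr rfl fun i hi => ?_
    have hi : d - 1 - i + 1 + i = d := by have := Finset.mem_range.1 hi; omega
    rw [mul_assoc, ← hi, pow_add _ _ i, mul_assoc, ← mul_pow, inv_mul_cancel₀ hq0, one_pow, hi,
      mul_one]

theorem tsum_sieveWeight_mul_pow (hq : 1 < q) (z : ℝ) :
    ∑' k, sieveWeight q k * z ^ k = ∏' j : ℕ, (1 - z * q⁻¹ ^ (j + 1)) := by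
  have hq0 : 0 < q := one_pos.trans hq
  have hgeom := summable_geometric_of_lt_one (inv_nonneg.2 hq0.le) (inv_lt_one_of_one_lt₀ hq)
  have hmult : Multipliable fun j : ℕ => 1 - z * q⁻¹ ^ (j + 1) := by
    simpa only [sub_eq_add_neg] using Real.multipliable_one_add_of_summable
      (((summable_nat_add_iff 1).2 hgeom).mul_left z).neg
  have hterm : ∀ k, Filter.Tendsto
      (fun d : ℕ => sieveWeight q k * z ^ k * ∏ i ∈ Finset.range k, (1 - q ^ i * q⁻¹ ^ d))
      Filter.atTop (nhds (sieveWeight q k * z ^ k)) := fun k => by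
    simpa using (tendsto_finsetProd (Finset.range k) fun i _ =>
      (hgeom.tendsto_atTop_zero.const_mul (q ^ i)).const_sub 1).const_mul
        (sieveWeight q k * z ^ k)
  have hbound : ∀ d k, ‖sieveWeight q k * z ^ k * ∏ i ∈ Finset.range k, (1 - q ^ i * q⁻¹ ^ d)‖
      ≤ ‖sieveWeight q k * z ^ k‖ := fun d k => by
    obtain ⟨h0, h1⟩ := prod_one_sub_pow_mul_inv_pow_mem_Icc hq d k
    rw [norm_mul, Real.norm_of_nonneg h0]
    exact mul_le_of_le_one_right (norm_nonneg _) h1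
  have hlim := tendsto_tsum_of_dominated_convergence (summable_sieveWeight_mul_pow hq z).norm
    hterm (.of_forall hbound)
  simp_rw [(hasSum_qBinomial_mul_inv_pow hq _ z).tsum_eq] at hlim
  exact tendsto_nhds_unique hlim hmult.tendsto_prod_tprod_nat

lemma hasSum_sieveWeight {p : ℕ} (hp : 1 < p) :
    HasSum (fun k => sieveWeight (p : ℝ) k) (clProd p 0) := by
  have hq : (1 : ℝ) < p := by exact_mod_cast hp
  have hprod : clProd p 0 = ∏' j : ℕ, (1 - 1 * (p : ℝ)⁻¹ ^ (j + 1)) := by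
    unfold clProd
    congr! 3 with j
    rw [one_mul, inv_pow, zpow_neg, Nat.cast_zero, add_zero]
    norm_cast
  have hs := (summable_sieveWeight_mul_pow hq 1).hasSum
  rw [tsum_sieveWeight_mul_pow hq, ← hprod] at hs
  simpa only [one_pow, mul_one] using hs

end QSeries

section SurjectionsOntoVectorSpaces

instance finite_addMonoidHom {B A : Type*} [AddCommGroup B] [AddCommGroup A] [Module.Finite ℤ B]
    [Finite A] : Finite (B →+ A) := by
  obtain ⟨S, hS⟩ := (Module.Finite.iff_addGroup_fg.1 ‹Module.Finite ℤ B›).out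
  exact Finite.of_injective (fun f (x : S) => f x) fun f g hfg =>
    AddMonoidHom.eq_of_eqOn_dense hS fun x hx => congrFun hfg ⟨x, hx⟩

variable {p : ℕ} [Fact p.Prime] {K : Type*} [AddCommGroup K]

lemma surjective_pi_iff_linearIndependent {ι : Type*} [Finite ι] (s : ι → K →+ ZMod p) :
    Function.Surjective (AddMonoidHom.pi s) ↔ LinearIndependent (ZMod p) s := by
  have hcoe : LinearIndependent (ZMod p) s ↔
      LinearIndependent (ZMod p) fun i (x : K) => s i x := by
    let coe : (K →+ ZMod p) →ₗ[ZMod p] K → ZMod p :=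
      { toFun := fun f => f, map_add' := fun _ _ => rfl, map_smul' := fun _ _ => rfl }
    exact (coe.linearIndependent_iff (LinearMap.ker_eq_bot.2 DFunLike.coe_injective)).symm
  let S := AddSubgroup.toZModSubmodule p (AddMonoidHom.pi s).range
  have hspan : Submodule.span (ZMod p) (Set.range (flip fun i (x : K) => s i x)) = S :=
    Submodule.span_eq S
  rw [hcoe, ← span_flip_eq_top_iff_linearIndependent, hspan, ← AddMonoidHom.range_eq_top]
  simp [S]

lemma numSur_pi_zmod (K : Type*) [AddCommGroup K] [Module.Finite ℤ K] (k : ℕ) :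
    (numSur K (Fin k → ZMod p) : ℝ)
      = ∏ i ∈ Finset.range k, ((p : ℝ) ^ Module.finrank (ZMod p) (K →+ ZMod p) - (p : ℝ) ^ i) := by
  let pi : (Fin k → K →+ ZMod p) ≃ (K →+ Fin k → ZMod p) :=
    { toFun := AddMonoidHom.pi
      invFun := fun f i => (Pi.evalAddMonoidHom _ i).comp f }
  have hcard : numSur K (Fin k → ZMod p)
      = Nat.card {s : Fin k → K →+ ZMod p // LinearIndependent (ZMod p) s} :=
    (Nat.card_congr (pi.subtypeEquiv fun s => (surjective_pi_iff_linearIndependent s).symm)).symm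
  rw [hcard]
  rcases le_or_gt k (Module.finrank (ZMod p) (K →+ ZMod p)) with hk | hk
  · rw [card_linearIndependent hk, ZMod.card, Finset.prod_range, Nat.cast_prod]
    refine Finset.prod_congr rfl fun i _ => ?_
    rw [Nat.cast_sub (Nat.pow_le_pow_right (NeZero.pos p) (by lia)), Nat.cast_pow, Nat.cast_pow]
  · rw [Finset.prod_eq_zero (Finset.mem_range.2 hk) (sub_self _), Nat.cast_eq_zero,
      Nat.card_eq_zero]
    exact .inl ⟨fun s => hk.not_ge (by simpa using s.2.fintype_card_le_finrank)⟩

lemma exists_addMonoidHom_zmod_apply_ne_zero [Module (ZMod p) K] {x : K} (hx : x ≠ 0) :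
    ∃ f : K →+ ZMod p, f x ≠ 0 := by
  obtain ⟨f, hf⟩ := Module.Projective.exists_dual_ne_zero (ZMod p) hx
  exact ⟨f.toAddMonoidHom, hf⟩

lemma exists_addMonoidHom_zmod_ne_zero [Finite K] (hp : p ∣ Nat.card K) :
    ∃ f : K →+ ZMod p, f ≠ 0 := by
  obtain ⟨x, hx⟩ := exists_prime_addOrderOf_dvd_card' p hp
  have hnot : ¬ Function.Surjective (nsmulAddMonoidHom (α := K) p) := fun hs => by
    have hpx : nsmulAddMonoidHom p x = nsmulAddMonoidHom p 0 := by
      simp [← hx, addOrderOf_nsmul_eq_zero]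
    rw [Finite.injective_iff_surjective.2 hs hpx, addOrderOf_zero] at hx
    exact (Fact.out : p.Prime).one_lt.ne hx
  obtain ⟨y, hy⟩ := not_forall.1 hnot
  let pK := (nsmulAddMonoidHom (α := K) p).range
  let _ : Module (ZMod p) (K ⧸ pK) := QuotientAddGroup.zmodModule fun x => ⟨x, rfl⟩
  have hy' : (y : K ⧸ pK) ≠ 0 := mt (QuotientAddGroup.eq_zero_iff y).1 hy
  obtain ⟨f, hf⟩ := exists_addMonoidHom_zmod_apply_ne_zero (p := p) hy'
  exact ⟨f.comp (QuotientAddGroup.mk' pK), fun h => hf (DFunLike.congr_fun h y)⟩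

lemma finrank_addMonoidHom_zmod_eq_zero_iff [Finite K] (hK : ∃ n, Nat.card K = p ^ n) :
    Module.finrank (ZMod p) (K →+ ZMod p) = 0 ↔ Subsingleton K := by
  rw [Module.finrank_zero_iff]
  refine ⟨fun h => ?_, fun h => ⟨fun f g => by ext x; rw [Subsingleton.elim x 0]; simp⟩⟩
  obtain ⟨n, hn⟩ := hK
  rw [← Finite.card_le_one_iff_subsingleton]
  by_contra! hne
  have hdvd : p ∣ Nat.card K := by
    rw [hn]
    exact dvd_pow_self p fun h0 => by simp [hn, h0] at hne
  obtain ⟨f, hf⟩ := exists_addMonoidHom_zmod_ne_zero hdvd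
  exact hf (Subsingleton.elim f 0)

-- This is Möbius inversion on the subgroups of `K`: only the trivial group survives.
theorem hasSum_sieveWeight_mul_numSur [Finite K] (hK : ∃ n, Nat.card K = p ^ n) :
    HasSum (fun k => sieveWeight p k * numSur K (Fin k → ZMod p))
      (if Subsingleton K then 1 else 0) := by
  simp_rw [numSur_pi_zmod, ← finrank_addMonoidHom_zmod_eq_zero_iff hK]
  exact hasSum_sieveWeight_mul_prod (by exact_mod_cast (Fact.out : p.Prime).one_lt) _

end SurjectionsOntoVectorSpaces

section Extensions

variable {F V E A B M : Type*} [AddCommGroup F] [AddCommGroup V] [AddCommGroup E] [AddCommGroup A]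
  [AddCommGroup B] [AddCommGroup M]

lemma exists_inl_comp_eq (S : AddGroupExtension V E A) {h : M →+ E} (hh : S.rightHom.comp h = 0) :
    ∃ f : M →+ V, S.inl.comp f = h := by
  have hrange : ∀ m, h m ∈ S.inl.range := fun m =>
    S.range_inl_eq_ker_rightHom ▸ DFunLike.congr_fun hh m
  refine ⟨(AddMonoidHom.ofInjective S.inl_injective).symm.toAddMonoidHom.comp
    (h.codRestrict _ hrange), ?_⟩
  ext m
  exact congrArg Subtype.val
    ((AddMonoidHom.ofInjective S.inl_injective).apply_symm_apply ⟨h m, hrange m⟩)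

-- The surjective part of the five lemma.
lemma surjective_iff_surjective_ker (S : AddGroupExtension V E A) {φ : B →+ A}
    (hφ : Function.Surjective φ) {g : B →+ E} {ψ : φ.ker →+ V} (hg : S.rightHom.comp g = φ)
    (hψ : g.comp φ.ker.subtype = S.inl.comp ψ) : Function.Surjective g ↔ Function.Surjective ψ := by
  have hg (b : B) : S.rightHom (g b) = φ b := DFunLike.congr_fun hg b
  have hψ (k : φ.ker) : g k = S.inl (ψ k) := DFunLike.congr_fun hψ k
  refine ⟨fun hsurj v => ?_, fun hsurj e => ?_⟩
  · obtain ⟨b, hb⟩ := hsurj (S.inl v)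
    have hbker : b ∈ φ.ker := by rw [AddMonoidHom.mem_ker, ← hg, hb, S.rightHom_inl]
    exact ⟨⟨b, hbker⟩, S.inl_injective ((hψ _).symm.trans hb)⟩
  · obtain ⟨b, hb⟩ := hφ (S.rightHom e)
    have hdiff : e - g b ∈ S.inl.range := by
      rw [S.range_inl_eq_ker_rightHom, AddMonoidHom.mem_ker, map_sub, hg, hb, sub_self]
    obtain ⟨v, hv⟩ := hdiff
    obtain ⟨k, rfl⟩ := hsurj v
    exact ⟨k + b, by rw [map_add, hψ, hv, sub_add_cancel]⟩

/-- The homomorphism `ker q → ker φ` induced by a lift `r : F → B` of `q : F → A` through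
`φ : B → A`. When `q` is surjective, it exhibits `B` as the pushout of `ker φ ← ker q → F`. -/
def kerLift {q : F →+ A} {φ : B →+ A} (r : F →+ B) (hr : φ.comp r = q) : q.ker →+ φ.ker :=
  (r.comp q.ker.subtype).codRestrict φ.ker fun x => (DFunLike.congr_fun hr x.1).trans x.2

variable {q : F →+ A} {φ : B →+ A} {r : F →+ B}

lemma surjective_coprod_subtype_ker (hq : Function.Surjective q) (hr : φ.comp r = q) :
    Function.Surjective (φ.ker.subtype.coprod r) := fun b => by
  obtain ⟨x, hx⟩ := hq (φ b)
  have hmem : b - r x ∈ φ.ker := by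
    rw [AddMonoidHom.mem_ker, map_sub, ← hx, ← hr, AddMonoidHom.comp_apply, sub_self]
  exact ⟨(⟨b - r x, hmem⟩, x), by simp⟩

lemma hom_ext_ker (hq : Function.Surjective q) (hr : φ.comp r = q) {g g' : B →+ E}
    (hker : g.comp φ.ker.subtype = g'.comp φ.ker.subtype) (hlift : g.comp r = g'.comp r) :
    g = g' := by
  rw [← AddMonoidHom.cancel_right (surjective_coprod_subtype_ker hq hr), AddMonoidHom.comp_coprod,
    AddMonoidHom.comp_coprod, hker, hlift]

lemma exists_hom_of_ker (hq : Function.Surjective q) (hr : φ.comp r = q) {f : φ.ker →+ E}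
    {h : F →+ E} (hfh : f.comp (kerLift r hr) = h.comp q.ker.subtype) :
    ∃ g : B →+ E, g.comp φ.ker.subtype = f ∧ g.comp r = h := by
  have hsurj := surjective_coprod_subtype_ker hq hr
  have hker : (φ.ker.subtype.coprod r).ker ≤ (f.coprod h).ker := by
    rintro ⟨k, x⟩ hkx
    have hsum : (k : B) + r x = 0 := hkx
    have hx : x ∈ q.ker := by
      simpa [← hr, AddMonoidHom.mem_ker.1 k.2] using congrArg φ hsum
    have hk : k = -kerLift r hr ⟨x, hx⟩ := Subtype.ext (eq_neg_of_add_eq_zero_left hsum)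
    have hfx : f (kerLift r hr ⟨x, hx⟩) = h x := DFunLike.congr_fun hfh ⟨x, hx⟩
    rw [AddMonoidHom.mem_ker, AddMonoidHom.coprod_apply, hk, map_neg, hfx, neg_add_cancel]
  let g := (φ.ker.subtype.coprod r).liftOfSurjective hsurj ⟨f.coprod h, hker⟩
  have hg (y) : g (φ.ker.subtype.coprod r y) = f.coprod h y :=
    AddMonoidHom.liftOfRightInverse_comp_apply _ _ (Function.rightInverse_surjInv hsurj) _ y
  exact ⟨g, by ext k; simpa using hg (k, 0), by ext x; simpa using hg (0, x)⟩

variable {S : AddGroupExtension V E A} {s : F →+ E} {χ : q.ker →+ V}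

lemma exists_hom_over (hq : Function.Surjective q) (hr : φ.comp r = q) (hs : S.rightHom.comp s = q)
    (hχ : s.comp q.ker.subtype = S.inl.comp χ) {ψ : φ.ker →+ V} {t : F →+ V}
    (hψt : ψ.comp (kerLift r hr) - t.comp q.ker.subtype = χ) :
    ∃ g : B →+ E, S.rightHom.comp g = φ ∧ g.comp φ.ker.subtype = S.inl.comp ψ ∧
      g.comp r = S.inl.comp t + s := by
  obtain ⟨g, hgψ, hgt⟩ := exists_hom_of_ker hq hr (f := S.inl.comp ψ) (h := S.inl.comp t + s) (by
    rw [AddMonoidHom.add_comp, hχ, ← hψt, AddMonoidHom.comp_sub]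
    simp only [AddMonoidHom.comp_assoc, add_sub_cancel])
  refine ⟨g, hom_ext_ker hq hr ?_ ?_, hgψ, hgt⟩
  · ext k
    simp [AddMonoidHom.comp_assoc, hgψ, AddMonoidHom.mem_ker.1 k.2]
  · rw [AddMonoidHom.comp_assoc, hgt, AddMonoidHom.comp_add, ← AddMonoidHom.comp_assoc,
      S.rightHom_comp_inl, AddMonoidHom.zero_comp, zero_add, hs, hr]

lemma exists_of_hom_over (hr : φ.comp r = q) (hs : S.rightHom.comp s = q)
    (hχ : s.comp q.ker.subtype = S.inl.comp χ) {g : B →+ E} (hg : S.rightHom.comp g = φ) :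
    ∃ (ψ : φ.ker →+ V) (t : F →+ V), g.comp φ.ker.subtype = S.inl.comp ψ ∧
      g.comp r = S.inl.comp t + s ∧ ψ.comp (kerLift r hr) - t.comp q.ker.subtype = χ := by
  have hzero : S.rightHom.comp (g.comp φ.ker.subtype) = 0 := by
    rw [← AddMonoidHom.comp_assoc, hg]
    ext k
    exact k.2
  obtain ⟨ψ, hψ⟩ := exists_inl_comp_eq S hzero
  obtain ⟨t, ht⟩ := exists_inl_comp_eq S (h := g.comp r - s) (by
    rw [AddMonoidHom.comp_sub, ← AddMonoidHom.comp_assoc, hg, hr, hs, sub_self])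
  refine ⟨ψ, t, hψ.symm, by rw [ht, sub_add_cancel], ?_⟩
  rw [← AddMonoidHom.cancel_left S.inl_injective, AddMonoidHom.comp_sub, ← AddMonoidHom.comp_assoc,
    ← AddMonoidHom.comp_assoc, hψ, ht, ← hχ, AddMonoidHom.sub_comp]
  exact sub_sub_cancel _ _

lemma nonempty_surjective_over_equiv (hq : Function.Surjective q) (hφ : Function.Surjective φ)
    (hr : φ.comp r = q) (hs : S.rightHom.comp s = q)
    (hχ : s.comp q.ker.subtype = S.inl.comp χ) :
    Nonempty ({g : B →+ E // S.rightHom.comp g = φ ∧ Function.Surjective g} ≃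
      {y : {ψ : φ.ker →+ V // Function.Surjective ψ} × (F →+ V) //
        y.1.1.comp (kerLift r hr) - y.2.comp q.ker.subtype = χ}) := by
  choose ψ t hψ ht hψt using
    fun g : {g : B →+ E // S.rightHom.comp g = φ ∧ Function.Surjective g} =>
      exists_of_hom_over hr hs hχ g.2.1
  refine ⟨.ofBijective (fun g =>
    ⟨(⟨ψ g, (surjective_iff_surjective_ker S hφ g.2.1 (hψ g)).1 g.2.2⟩, t g), hψt g⟩) ⟨?_, ?_⟩⟩
  · intro g g' h
    obtain ⟨hψeq, hteq⟩ := Prod.ext_iff.1 (congrArg Subtype.val h)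
    have hψeq : ψ g = ψ g' := congrArg Subtype.val hψeq
    have hteq : t g = t g' := hteq
    exact Subtype.ext (hom_ext_ker hq hr (by rw [hψ, hψ, hψeq]) (by rw [ht, ht, hteq]))
  · rintro ⟨⟨⟨ψ', hψ'⟩, t'⟩, hcompat⟩
    obtain ⟨g, hg, hgψ, hgt⟩ := exists_hom_over hq hr hs hχ hcompat
    let G : {g : B →+ E // S.rightHom.comp g = φ ∧ Function.Surjective g} :=
      ⟨g, hg, (surjective_iff_surjective_ker S hφ hg hgψ).2 hψ'⟩
    have hψeq : ψ G = ψ' := (AddMonoidHom.cancel_left S.inl_injective).1 ((hψ G).symm.trans hgψ)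
    have hteq : t G = t' := (AddMonoidHom.cancel_left S.inl_injective).1
      (add_right_cancel ((ht G).symm.trans hgt))
    exact ⟨G, Subtype.ext (Prod.ext (Subtype.ext hψeq) hteq)⟩

/-- The pushout of `F ← ker q → V` along `χ`. As `χ` varies, these groups run over the extensions
of `A` by `V` when `F` is free and `q` is surjective. -/
abbrev PushoutGroup (q : F →+ A) (χ : q.ker →+ V) : Type _ :=
  (F × V) ⧸ (q.ker.subtype.prod (-χ)).range

/-- The canonical map from `F` to the pushout of `F ← ker q → V`. -/
def pushoutLift (q : F →+ A) (χ : q.ker →+ V) : F →+ PushoutGroup q χ :=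
  (QuotientAddGroup.mk' _).comp (AddMonoidHom.inl F V)

/-- The pushout of the extension `0 → ker q → F → A → 0` along `χ : ker q → V`. -/
def pushoutExtension {q : F →+ A} (hq : Function.Surjective q) (χ : q.ker →+ V) :
    AddGroupExtension V (PushoutGroup q χ) A where
  inl := (QuotientAddGroup.mk' _).comp (AddMonoidHom.inr F V)
  rightHom := QuotientAddGroup.lift _ (q.comp (AddMonoidHom.fst F V)) (by
    rintro _ ⟨l, rfl⟩
    exact l.2)
  inl_injective := by
    rw [injective_iff_map_eq_zero]
    intro v hv
    obtain ⟨l, hl⟩ := (QuotientAddGroup.eq_zero_iff _).1 hv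
    obtain ⟨hl, hlv⟩ := Prod.ext_iff.1 hl
    have hl : l = 0 := Subtype.ext hl
    simpa [hl] using hlv.symm
  range_inl_eq_ker_rightHom := by
    ext e
    obtain ⟨⟨x, v⟩, rfl⟩ := QuotientAddGroup.mk_surjective e
    constructor
    · rintro ⟨w, hw⟩
      rw [← hw]
      exact map_zero q
    · intro hx
      refine ⟨v + χ ⟨x, hx⟩, QuotientAddGroup.eq.2 ⟨⟨x, hx⟩, ?_⟩⟩
      simp
  rightHom_surjective := fun a =>
    let ⟨x, hx⟩ := hq a
    ⟨pushoutLift q χ x, hx⟩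

lemma pushoutExtension_rightHom_comp_lift (hq : Function.Surjective q) (χ : q.ker →+ V) :
    (pushoutExtension hq χ).rightHom.comp (pushoutLift q χ) = q := rfl

lemma pushoutLift_comp_subtype (hq : Function.Surjective q) (χ : q.ker →+ V) :
    (pushoutLift q χ).comp q.ker.subtype = (pushoutExtension hq χ).inl.comp χ := by
  ext l
  exact QuotientAddGroup.eq.2 ⟨-l, by simp⟩

/-- The surjections `B → A` sending `b` to `a`. -/
abbrev PointedSur (B : Type*) [AddCommGroup B] (b : B) (A : Type*) [AddCommGroup A] (a : A) :
    Type _ :=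
  {φ : B →+ A // Function.Surjective φ ∧ φ b = a}

/-- The pointed surjections `(B, b) → (A, a)` together with a surjection of their kernel onto
`V`. -/
abbrev KernelSur (B : Type*) [AddCommGroup B] (b : B) (A : Type*) [AddCommGroup A] (a : A)
    (V : Type*) [AddCommGroup V] : Type _ :=
  Σ φ : PointedSur B b A a, {ψ : φ.1.ker →+ V // Function.Surjective ψ}

/-- Sorting the surjections onto an extension of `A` by the surjection onto `A` they induce. -/
def surjectiveOverEquiv (S : AddGroupExtension V E A) (b : B) (a : A) :
    {g : B →+ E // Function.Surjective g ∧ S.rightHom (g b) = a} ≃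
      Σ φ : PointedSur B b A a,
        {g : B →+ E // S.rightHom.comp g = φ.1 ∧ Function.Surjective g} where
  toFun g := ⟨⟨S.rightHom.comp g.1, S.rightHom_surjective.comp g.2.1, g.2.2⟩, g.1, rfl, g.2.1⟩
  invFun y := ⟨y.2.1, y.2.2.2, (DFunLike.congr_fun y.2.2.1 b).trans y.1.2.2⟩
  left_inv _ := rfl
  right_inv := by
    rintro ⟨⟨φ, _⟩, g, hg, _⟩
    obtain rfl : S.rightHom.comp g = φ := hg
    rfl

-- A surjection onto an extension of `A` by `V` is a surjection `φ` onto `A`, a surjection `ψ` of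
-- `ker φ` onto `V` and some `t : F → V`; then `φ`, `ψ` and `t` determine `χ` uniquely.
theorem nonempty_sigma_surjective_over_equiv [Module.Projective ℤ F] (hq : Function.Surjective q)
    (b : B) (a : A) :
    Nonempty ((Σ χ : q.ker →+ V, {g : B →+ PushoutGroup q χ //
        Function.Surjective g ∧ (pushoutExtension hq χ).rightHom (g b) = a}) ≃
      KernelSur B b A a V × (F →+ V)) := by
  have hlift (φ : PointedSur B b A a) : ∃ r : F →+ B, φ.1.comp r = q := by
    obtain ⟨r, hr⟩ := Module.projective_lifting_property φ.1.toIntLinearMap q.toIntLinearMap φ.2.1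
    exact ⟨r.toAddMonoidHom, AddMonoidHom.ext fun x => DFunLike.congr_fun hr x⟩
  choose r hr using hlift
  have hover (χ : q.ker →+ V) (φ : PointedSur B b A a) := (nonempty_surjective_over_equiv hq φ.2.1
    (hr φ) (pushoutExtension_rightHom_comp_lift hq χ) (pushoutLift_comp_subtype hq χ)).some
  let sortByClass : (Σ χ : q.ker →+ V, {g : B →+ PushoutGroup q χ //
      Function.Surjective g ∧ (pushoutExtension hq χ).rightHom (g b) = a}) ≃
      Σ χ : q.ker →+ V, Σ φ : PointedSur B b A a,
        {y : {ψ : φ.1.ker →+ V // Function.Surjective ψ} × (F →+ V) //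
          y.1.1.comp (kerLift (r φ) (hr φ)) - y.2.comp q.ker.subtype = χ} :=
    Equiv.sigmaCongrRight fun χ =>
      (surjectiveOverEquiv _ b a).trans (Equiv.sigmaCongrRight (hover χ))
  exact ⟨sortByClass.trans
    { toFun := fun y => (⟨y.2.1, y.2.2.1.1⟩, y.2.2.1.2)
      invFun := fun z => ⟨_, z.1.1, (z.1.2, z.2), rfl⟩
      left_inv := by rintro ⟨_, φ, y, rfl⟩; rfl
      right_inv := fun _ => rfl }⟩

end Extensions

section Moments

lemma nonempty_addEquiv_of_finiteIndex {F : Type*} [AddCommGroup F] [Module.Free ℤ F]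
    [Module.Finite ℤ F] (L : AddSubgroup F) [L.FiniteIndex] : Nonempty (L ≃+ F) := by
  have : Module.Free ℤ L := inferInstanceAs (Module.Free ℤ (AddSubgroup.toIntSubmodule L))
  have : Module.Finite ℤ L := inferInstanceAs (Module.Finite ℤ (AddSubgroup.toIntSubmodule L))
  exact ⟨(LinearEquiv.ofFinrankEq L F (AddSubgroup.finrank_eq_of_finiteIndex L)).toAddEquiv⟩

lemma card_eq_card_ker_mul_card {E A : Type*} [AddCommGroup E] [AddCommGroup A] {π : E →+ A}
    (hπ : Function.Surjective π) : Nat.card E = Nat.card π.ker * Nat.card A := by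
  rw [← π.ker.card_mul_index, AddSubgroup.index_ker, AddMonoidHom.range_eq_top.2 hπ,
    AddSubgroup.card_top]

lemma card_extension {V E A : Type*} [AddCommGroup V] [AddCommGroup E] [AddCommGroup A]
    (S : AddGroupExtension V E A) : Nat.card E = Nat.card V * Nat.card A := by
  rw [card_eq_card_ker_mul_card S.rightHom_surjective, ← S.range_inl_eq_ker_rightHom,
    Nat.card_congr (AddMonoidHom.ofInjective S.inl_injective).toEquiv]

/-- The pointed moments of the measure `ν` on the pointed groups `(B x, b x)` are those of the
pointed Cohen–Lenstra measure: the expected number of surjections onto `(A, a)` is `1 / |A|` for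
every pointed finite abelian `p`-group `(A, a)`. -/
def HasPointedMoments (p : ℕ) {X : Type*} (B : X → Type*) [∀ x, AddCommGroup (B x)]
    (b : ∀ x, B x) (ν : X → ℝ) : Prop :=
  ∀ (A : Type) [AddCommGroup A], (∃ n, Nat.card A = p ^ n) → ∀ a : A,
    HasSum (fun x => ν x * numPointedSur (B x) (b x) A a) (Nat.card A : ℝ)⁻¹

namespace HasPointedMoments

variable {p : ℕ} {X : Type*} {B : X → Type*} [∀ x, AddCommGroup (B x)] [∀ x, Finite (B x)]
  {b : ∀ x, B x} {ν : X → ℝ}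

lemma hasSum_card_surjective_over (h : HasPointedMoments p B b ν) {E A : Type}
    [AddCommGroup E] [AddCommGroup A] [Finite E] (hE : ∃ n, Nat.card E = p ^ n) {π : E →+ A}
    (hπ : Function.Surjective π) (a : A) :
    HasSum (fun x => ν x * Nat.card {g : B x →+ E // Function.Surjective g ∧ π (g (b x)) = a})
      (Nat.card A : ℝ)⁻¹ := by
  let _ : Fintype (π ⁻¹' {a}) := Fintype.ofFinite _
  have hsum := hasSum_sum (s := Finset.univ) fun (e : π ⁻¹' {a}) _ => h E hE e.1
  have hfiber : ∑ _e : π ⁻¹' {a}, (Nat.card E : ℝ)⁻¹ = (Nat.card A : ℝ)⁻¹ := by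
    have hker : (Nat.card π.ker : ℝ) ≠ 0 := Nat.cast_ne_zero.2 Nat.card_pos.ne'
    rw [Finset.sum_const, Finset.card_univ, ← Nat.card_eq_fintype_card,
      Nat.card_congr (AddMonoidHom.fiberEquivKerOfSurjective hπ a), card_eq_card_ker_mul_card hπ,
      nsmul_eq_mul, Nat.cast_mul, mul_inv, mul_inv_cancel_left₀ hker]
  rw [hfiber] at hsum
  refine hsum.congr_fun fun x => ?_
  let sortByImage : {g : B x →+ E // Function.Surjective g ∧ π (g (b x)) = a} ≃
      Σ e : π ⁻¹' {a}, PointedSur (B x) (b x) E e.1 :=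
    { toFun := fun g => ⟨⟨g.1 (b x), g.2.2⟩, g.1, g.2.1, rfl⟩
      invFun := fun y => ⟨y.2.1, y.2.2.1, y.2.2.2.symm ▸ y.1.2⟩
      right_inv := by
        rintro ⟨⟨e, _⟩, g, _, hg⟩
        obtain rfl : g (b x) = e := hg
        rfl }
  rw [← Finset.mul_sum, Nat.card_congr sortByImage, Nat.card_sigma, Nat.cast_sum]
  rfl

-- Averages over the extensions of `A` by `V`, obtained as pushouts along all `χ : ker q →+ V`.
theorem hasSum_card_kernelSur (h : HasPointedMoments p B b ν) {A V : Type}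
    [AddCommGroup A] [AddCommGroup V] [Finite A] [Finite V]
    (hA : ∃ n, Nat.card A = p ^ n) (hV : ∃ n, Nat.card V = p ^ n) (a : A) :
    HasSum (fun x => ν x * Nat.card (KernelSur (B x) (b x) A a V)) (Nat.card A : ℝ)⁻¹ := by
  let q : (A →₀ ℤ) →+ A := (Finsupp.linearCombination ℤ (id : A → A)).toAddMonoidHom
  have hq : Function.Surjective q := Finsupp.linearCombination_id_surjective ℤ A
  have hcard (χ : q.ker →+ V) := card_extension (pushoutExtension hq χ)
  have hfin (χ : q.ker →+ V) : Finite (PushoutGroup q χ) :=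
    Nat.finite_of_card_ne_zero ((hcard χ).trans_ne (mul_ne_zero Nat.card_pos.ne' Nat.card_pos.ne'))
  have hpow (χ : q.ker →+ V) : ∃ n, Nat.card (PushoutGroup q χ) = p ^ n := by
    obtain ⟨m, hm⟩ := hA
    obtain ⟨n, hn⟩ := hV
    exact ⟨n + m, by rw [hcard, hm, hn, pow_add]⟩
  have hker : Nat.card (q.ker →+ V) = Nat.card ((A →₀ ℤ) →+ V) :=
    Nat.card_congr (nonempty_addEquiv_of_finiteIndex q.ker).some.addMonoidHomCongrLeftEquiv
  have hne : (Nat.card ((A →₀ ℤ) →+ V) : ℝ) ≠ 0 := Nat.cast_ne_zero.2 Nat.card_pos.ne'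
  have : Finite (q.ker →+ V) := Nat.finite_of_card_ne_zero (hker.trans_ne Nat.card_pos.ne')
  let _ : Fintype (q.ker →+ V) := Fintype.ofFinite _
  have hsum := (hasSum_sum (s := Finset.univ) fun (χ : q.ker →+ V) _ =>
    h.hasSum_card_surjective_over (hpow χ) (pushoutExtension hq χ).rightHom_surjective a).mul_right
      (Nat.card ((A →₀ ℤ) →+ V) : ℝ)⁻¹
  rw [Finset.sum_const, Finset.card_univ, ← Nat.card_eq_fintype_card, hker, nsmul_eq_mul, mul_comm,
    inv_mul_cancel_left₀ hne] at hsum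
  refine hsum.congr_fun fun x => ?_
  rw [← Finset.mul_sum, ← Nat.cast_sum, ← Nat.card_sigma,
    Nat.card_congr (nonempty_sigma_surjective_over_equiv hq (b x) a).some, Nat.card_prod,
    Nat.cast_mul, mul_assoc, mul_inv_cancel_right₀ hne]

end HasPointedMoments

lemma sum_ite_subsingleton_ker {B A : Type*} [AddCommGroup B] [AddCommGroup A] (b : B) (a : A)
    [Fintype (PointedSur B b A a)] :
    ∑ φ : PointedSur B b A a, (if Subsingleton φ.1.ker then (1 : ℝ) else 0)
      = Nat.card {e : B ≃+ A // e b = a} := by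
  have hinj (φ : B →+ A) : Subsingleton φ.ker ↔ Function.Injective φ :=
    ⟨fun _ => φ.ker_eq_bot_iff.1 φ.ker.eq_bot_of_subsingleton, fun h => by
      rw [φ.ker_eq_bot_iff.2 h]; infer_instance⟩
  let isoEquiv : {e : B ≃+ A // e b = a} ≃ {φ : PointedSur B b A a // Subsingleton φ.1.ker} :=
    { toFun := fun e =>
        ⟨⟨e.1.toAddMonoidHom, e.1.surjective, e.2⟩, (hinj _).2 e.1.injective⟩
      invFun := fun φ =>
        ⟨AddEquiv.ofBijective φ.1.1 ⟨(hinj _).1 φ.2, φ.1.2.1⟩, φ.1.2.2⟩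
      left_inv := fun _ => Subtype.ext (AddEquiv.ext fun _ => rfl)
      right_inv := fun _ => rfl }
  rw [Finset.sum_boole, Nat.card_congr isoEquiv, Nat.card_eq_fintype_card, Fintype.card_subtype]

lemma hasSum_sieveWeight_mul_card_kernelSur {p : ℕ} [Fact p.Prime] {B A : Type*} [AddCommGroup B]
    [AddCommGroup A] [Finite B] [Finite A] (hB : ∃ n, Nat.card B = p ^ n) (b : B) (a : A) :
    HasSum (fun k => sieveWeight p k * Nat.card (KernelSur B b A a (Fin k → ZMod p)))
      (Nat.card {e : B ≃+ A // e b = a}) := by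
  let _ : Fintype (PointedSur B b A a) := Fintype.ofFinite _
  have hker (φ : PointedSur B b A a) : ∃ n, Nat.card φ.1.ker = p ^ n := by
    obtain ⟨n, hn⟩ := hB
    obtain ⟨m, -, hm⟩ := (Nat.dvd_prime_pow Fact.out).1
      (hn ▸ AddSubgroup.card_addSubgroup_dvd_card φ.1.ker)
    exact ⟨m, hm⟩
  have hsum := hasSum_sum (s := Finset.univ) fun (φ : PointedSur B b A a) _ =>
    hasSum_sieveWeight_mul_numSur (hker φ)
  rw [sum_ite_subsingleton_ker] at hsum
  refine hsum.congr_fun fun k => ?_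
  rw [← Finset.mul_sum, Nat.card_sigma, Nat.cast_sum]
  rfl

lemma hasSum_of_hasSum_mul_of_nonneg {ι X : Type*} {w : ι → ℝ} {g : ι → X → ℝ} {M : X → ℝ}
    {W c : ℝ} (hw : HasSum w W) (hg0 : ∀ k x, 0 ≤ g k x) (hg : ∀ k, HasSum (g k) c)
    (hM : ∀ x, HasSum (fun k => w k * g k x) (M x)) : HasSum M (W * c) := by
  have hsum : Summable fun y : ι × X => w y.1 * g y.1 y.2 := by
    refine .of_norm ((summable_prod_of_nonneg fun _ => norm_nonneg _).2 ⟨fun k => ?_, ?_⟩)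
    · exact ((hg k).summable.mul_left (w k)).norm
    · simp_rw [norm_mul, Real.norm_of_nonneg (hg0 _ _), tsum_mul_left, (hg _).tsum_eq]
      exact hw.summable.norm.mul_right c
  have htotal : ∑' y : ι × X, w y.1 * g y.1 y.2 = W * c :=
    (hsum.hasSum.prod_fiberwise fun k => (hg k).mul_left (w k)).unique (hw.mul_right c)
  rw [← htotal]
  exact ((Equiv.prodComm X ι).hasSum_iff.2 hsum.hasSum).prod_fiberwise hM

theorem HasPointedMoments.hasSum_card_addEquiv {p : ℕ} [Fact p.Prime] {X : Type*} {B : X → Type*}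
    [∀ x, AddCommGroup (B x)] [∀ x, Finite (B x)] (hB : ∀ x, ∃ n, Nat.card (B x) = p ^ n)
    {b : ∀ x, B x} {ν : X → ℝ} (hν : ∀ x, 0 ≤ ν x) (h : HasPointedMoments p B b ν)
    {A : Type} [AddCommGroup A] [Finite A] (hA : ∃ n, Nat.card A = p ^ n) (a : A) :
    HasSum (fun x => ν x * Nat.card {e : B x ≃+ A // e (b x) = a})
      (clProd p 0 * (Nat.card A : ℝ)⁻¹) :=
  hasSum_of_hasSum_mul_of_nonneg (hasSum_sieveWeight (Fact.out : p.Prime).one_lt)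
    (fun _ x => mul_nonneg (hν x) (Nat.cast_nonneg _))
    (fun k => h.hasSum_card_kernelSur hA (V := Fin k → ZMod p) ⟨k, by simp⟩ a)
    (fun x => ((hasSum_sieveWeight_mul_card_kernelSur (hB x) (b x) a).mul_left (ν x)).congr_fun
      fun _ => mul_left_comm _ _ _)

end Moments

section Partitions

lemma card_torsion_zmod {p : ℕ} (hp : p ≠ 0) (n j : ℕ) :
    Nat.card {x : ZMod (p ^ n) // p ^ j • x = 0} = p ^ min n j := by
  have : NeZero (p ^ n) := ⟨pow_ne_zero n hp⟩
  have hgcd : (p ^ n).gcd (p ^ j) = p ^ min n j := by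
    rcases le_total n j with hnj | hjn
    · rw [min_eq_left hnj, Nat.gcd_eq_left (pow_dvd_pow p hnj)]
    · rw [min_eq_right hjn, Nat.gcd_eq_right (pow_dvd_pow p hjn)]
  have hker := IsAddCyclic.card_nsmulAddMonoidHom_ker (ZMod (p ^ n)) (p ^ j)
  rwa [Nat.card_zmod, hgcd] at hker

lemma card_torsion_clGroup {p : ℕ} (hp : p ≠ 0) (lam : Multiset ℕ+) (j : ℕ) :
    Nat.card {x : CLGroup p lam // p ^ j • x = 0}
      = p ^ (lam.map fun n : ℕ+ => min (n : ℕ) j).sum := by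
  have componentwise : {x : CLGroup p lam // p ^ j • x = 0} ≃
      ∀ i : Fin lam.toList.length, {x : ZMod (p ^ (lam.toList.get i : ℕ)) // p ^ j • x = 0} := by
    refine (Equiv.subtypeEquivRight fun x => ?_).trans Equiv.subtypePiEquivPi
    exact funext_iff
  rw [Nat.card_congr componentwise, Nat.card_pi]
  simp_rw [card_torsion_zmod hp]
  rw [Finset.prod_pow_eq_pow_sum, ← Multiset.sum_map_toList]
  exact congrArg (p ^ ·) (Fin.sum_univ_fun_getElem lam.toList fun n : ℕ+ => min (n : ℕ) j)

-- The second difference of `min n` is minus the indicator function of `n`.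
lemma sum_min_add_sum_min_add_count (lam : Multiset ℕ+) (c : ℕ+) :
    (lam.map fun n : ℕ+ => min (n : ℕ) (c + 1)).sum
      + (lam.map fun n : ℕ+ => min (n : ℕ) (c - 1)).sum + lam.count c
      = 2 * (lam.map fun n : ℕ+ => min (n : ℕ) c).sum := by
  induction lam using Multiset.induction_on with
  | empty => simp
  | cons n lam ih =>
    have hpos := c.pos
    simp only [Multiset.map_cons, Multiset.sum_cons, Multiset.count_cons, ← PNat.coe_inj]
    split_ifs <;> omega

theorem eq_of_clGroup_addEquiv {p : ℕ} (hp : 1 < p) {lam mu : Multiset ℕ+}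
    (e : CLGroup p lam ≃+ CLGroup p mu) : lam = mu := by
  have hsum (j : ℕ) : (lam.map fun n : ℕ+ => min (n : ℕ) j).sum
      = (mu.map fun n : ℕ+ => min (n : ℕ) j).sum := by
    refine Nat.pow_right_injective hp ?_
    simp only [← card_torsion_clGroup (zero_lt_one.trans hp).ne']
    exact Nat.card_congr (e.toEquiv.subtypeEquiv fun x => by simp [← map_nsmul])
  refine Multiset.ext.2 fun c => ?_
  have hlam := sum_min_add_sum_min_add_count lam c
  have hmu := sum_min_add_sum_min_add_count mu c
  simp only [hsum] at hlam
  omega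

lemma card_clGroup (p : ℕ) (lam : Multiset ℕ+) :
    Nat.card (CLGroup p lam) = p ^ (lam.map fun n : ℕ+ => (n : ℕ)).sum := by
  unfold CLGroup
  simp_rw [Nat.card_pi, Nat.card_zmod]
  rw [Finset.prod_pow_eq_pow_sum, ← Multiset.sum_map_toList]
  exact congrArg (p ^ ·) (Fin.sum_univ_fun_getElem lam.toList fun n : ℕ+ => (n : ℕ))

lemma finite_clGroup {p : ℕ} (hp : p ≠ 0) (lam : Multiset ℕ+) : Finite (CLGroup p lam) :=
  Nat.finite_of_card_ne_zero (card_clGroup p lam ▸ pow_ne_zero _ hp)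

end Partitions

section Determination

-- A non-summable family has the junk sum `0`, so a nonzero sum forces summability.
lemma hasSum_sigma_of_tsum_ne_zero {ι : Type*} {κ : ι → Type*} [∀ i, Finite (κ i)]
    {f : (Σ i, κ i) → ℝ} (hf : ∀ y, 0 ≤ f y) (hne : ∑' i, ∑' c, f ⟨i, c⟩ ≠ 0) :
    HasSum f (∑' i, ∑' c, f ⟨i, c⟩) := by
  have hsum : Summable f :=
    (summable_sigma_of_nonneg hf).2
      ⟨fun _ => .of_finite, by_contra fun h => hne (tsum_eq_zero_of_not_summable h)⟩
  exact hsum.tsum_sigma ▸ hsum.hasSum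

lemma sum_mul_card_addEquiv {G : Type*} [AddCommGroup G] [Fintype G] {f : G → ℝ}
    (hf : ∀ (σ : G ≃+ G) (c : G), f (σ c) = f c) (a : G) :
    ∑ c, f c * Nat.card {e : G ≃+ G // e c = a} = f a * numAut G := by
  have hconst (c : G) : f c * Nat.card {e : G ≃+ G // e c = a}
      = f a * Nat.card {e : G ≃+ G // e c = a} := by
    rcases isEmpty_or_nonempty {e : G ≃+ G // e c = a} with hempty | ⟨e, rfl⟩
    · simp
    · rw [hf]
  let sortByPreimage : (G ≃+ G) ≃ Σ c, {e : G ≃+ G // e c = a} :=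
    { toFun := fun e => ⟨e.symm a, e, e.apply_symm_apply a⟩
      invFun := fun y => y.2.1
      right_inv := by
        rintro ⟨c, e, rfl⟩
        ext <;> simp }
  rw [Finset.sum_congr rfl fun c _ => hconst c, ← Finset.mul_sum, ← Nat.cast_sum,
    ← Nat.card_sigma, numAut, Nat.card_congr sortByPreimage]

lemma hasSum_mul_card_addEquiv_clGroup {p : ℕ} (hp : 1 < p)
    {ν : (lam : Multiset ℕ+) → CLGroup p lam → ℝ}
    {lam : Multiset ℕ+} (hinv : ∀ (σ : CLGroup p lam ≃+ CLGroup p lam) (b : CLGroup p lam),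
      ν lam (σ b) = ν lam b) (a : CLGroup p lam) :
    HasSum (fun y : Σ mu, CLGroup p mu =>
        ν y.1 y.2 * Nat.card {e : CLGroup p y.1 ≃+ CLGroup p lam // e y.2 = a})
      (ν lam a * numAut (CLGroup p lam)) := by
  have := finite_clGroup (zero_lt_one.trans hp).ne' lam
  let _ : Fintype (CLGroup p lam) := Fintype.ofFinite _
  rw [← sum_mul_card_addEquiv hinv a, ← (sigma_mk_injective (i := lam)).hasSum_iff]
  · exact hasSum_fintype _
  · rintro ⟨mu, c⟩ hmu
    have : IsEmpty {e : CLGroup p mu ≃+ CLGroup p lam // e c = a} := ⟨fun e => by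
      obtain rfl := eq_of_clGroup_addEquiv hp e.1
      exact hmu ⟨c, rfl⟩⟩
    simp

theorem cl_pointed_moments_determine_general (p : ℕ) (hp : p.Prime)
    (ν : (lam : Multiset ℕ+) → CLGroup p lam → ℝ)
    (hν : ∀ lam b, 0 ≤ ν lam b)
    (hinv : ∀ (lam : Multiset ℕ+) (σ : CLGroup p lam ≃+ CLGroup p lam) (b : CLGroup p lam),
      ν lam (σ b) = ν lam b)
    (hmom : ∀ (A : Type) [AddCommGroup A], (∃ n : ℕ, Nat.card A = p ^ n) → ∀ a : A,
      ∑' lam : Multiset ℕ+, ∑' b : CLGroup p lam,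
        ν lam b * (numPointedSur (CLGroup p lam) b A a : ℝ)
        = (Nat.card A : ℝ)⁻¹)
    (lam : Multiset ℕ+) (b : CLGroup p lam) :
    ν lam b = clMeasure p 0 (CLGroup p lam) / (Nat.card (CLGroup p lam) : ℝ) := by
  have := Fact.mk hp
  have hfin := finite_clGroup hp.ne_zero
  have hmoments : HasPointedMoments p (fun y : Σ mu, CLGroup p mu => CLGroup p y.1) (·.2)
      (fun y => ν y.1 y.2) := fun A _ ⟨n, hn⟩ a => by
    have hne : (Nat.card A : ℝ)⁻¹ ≠ 0 := by simp [hn, hp.ne_zero]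
    rw [← hmom A ⟨n, hn⟩ a] at hne ⊢
    exact hasSum_sigma_of_tsum_ne_zero (fun _ => mul_nonneg (hν _ _) (Nat.cast_nonneg _)) hne
  have hvalue := (hmoments.hasSum_card_addEquiv (fun _ => ⟨_, card_clGroup p _⟩)
    (fun _ => hν _ _) ⟨_, card_clGroup p lam⟩ b).unique
      (hasSum_mul_card_addEquiv_clGroup hp.one_lt (hinv lam) b)
  have haut : (numAut (CLGroup p lam) : ℝ) ≠ 0 := by
    have := Finite.of_injective _ (DFunLike.coe_injective (F := CLGroup p lam ≃+ CLGroup p lam))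
    exact Nat.cast_ne_zero.2 (Nat.card_pos (α := CLGroup p lam ≃+ CLGroup p lam)).ne'
  rw [clMeasure, pow_zero, inv_one, one_mul, div_eq_mul_inv, mul_assoc, hvalue]
  field_simp

end Determination

/-- Pointed moments determine the pointed Cohen–Lenstra measure: if `ν` is a nonnegative
function on pointed finite abelian `p`-groups `(G_λ, b)` depending only on the isomorphism
class, and all its pointed moments are `1/|A|`, then `ν(λ,b) = μ^0(G_λ)/|G_λ|`, i.e. `ν` is
the pointed Cohen–Lenstra measure. -/
theorem cl_pointed_moments_determine (p : ℕ) (hp : p.Prime) (hodd : Odd p)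
    (ν : (lam : Multiset ℕ+) → CLGroup p lam → ℝ)
    (hν : ∀ lam b, 0 ≤ ν lam b)
    (hinv : ∀ (lam : Multiset ℕ+) (σ : CLGroup p lam ≃+ CLGroup p lam) (b : CLGroup p lam),
      ν lam (σ b) = ν lam b)
    (hmom : ∀ (A : Type) [AddCommGroup A], (∃ n : ℕ, Nat.card A = p ^ n) → ∀ a : A,
      ∑' lam : Multiset ℕ+, ∑' b : CLGroup p lam,
        ν lam b * (numPointedSur (CLGroup p lam) b A a : ℝ)
        = (Nat.card A : ℝ)⁻¹) :
    ∀ (lam : Multiset ℕ+) (b : CLGroup p lam),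
      ν lam b = clMeasure p 0 (CLGroup p lam) / (Nat.card (CLGroup p lam) : ℝ) :=
  cl_pointed_moments_determine_general p hp ν hν hinv hmom
end

section
/- For every integer u ≥ 0, the Cohen–Lenstra measure μ^u is a probability measure: the sum over isomorphism classes of finite abelian p-groups A of μ^u(A) equals 1, i.e. ∑_A |A|^{-u} · |Aut(A)|^{-1} · ∏_{k=1}^∞ (1 − p^{-(k+u)}) = 1. -/
/-!
Cohen–Lenstra moments: for every integer `u ≥ 0` and every finite abelian `p`-group `A`,
the sum over isomorphism classes of finite abelian `p`-groups `B` of `|Sur(B,A)| · μ^u(B)`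
equals `|A|^{-u}`.
-/

open scoped Classical

/-!
For a finite abelian `p`-group `A`, the number of subgroups `L ≤ ℤᵏ` with `ℤᵏ ⧸ L ≃ A` is
`|Sur(ℤᵏ, A)| / |Aut A|`. Hence `∑_A |Sur(ℤᵏ, A)| |Aut A|⁻¹ |A|^{-(k+u)}` is the `p`-part of the
subgroup zeta function of `ℤᵏ` at `k + u`. The latter equals `∏_{j=1}^k (1 - p^{-(j+u)})⁻¹`:
Goursat's lemma describes the subgroups of `ℤ × G` by triples `(L ≤ G, N ≤ ℤ, N → G ⧸ L)`, and
there are `[G : L]` homomorphisms `N → G ⧸ L`, so that `ζ_{ℤ × G}(s + 1) = ζ_G(s) ζ_ℤ(s + 1)`.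
As `k → ∞`, the ratio `|Sur(ℤᵏ, A)| / |A|ᵏ ≤ 1` tends to `1`, which gives
`∑_A |A|^{-u} |Aut A|⁻¹ = ∏_{j=1}^∞ (1 - p^{-(j+u)})⁻¹`.
-/

open Filter Topology
open scoped ENNReal

section GraphSubgroup

variable {H G : Type*} [AddCommGroup H] [AddCommGroup G]

theorem index_eq_index_comap_inr_mul_index_map_fst (M : AddSubgroup (H × G)) :
    M.index = (M.comap (AddMonoidHom.inr H G)).index * (M.map (AddMonoidHom.fst H G)).index := by
  have ker_fst : (AddMonoidHom.fst H G).ker = (AddMonoidHom.inr H G).range := by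
    ext ⟨h, g⟩
    simp [AddSubgroup.mem_prod, eq_comm (a := h)]
  rw [AddSubgroup.index_comap,
    ← AddSubgroup.index_comap_of_surjective (M.map (AddMonoidHom.fst H G))
      (f := AddMonoidHom.fst H G) Prod.fst_surjective,
    AddSubgroup.comap_map_eq, ← ker_fst, ← AddSubgroup.relIndex_sup_left,
    AddSubgroup.relIndex_mul_index le_sup_left]

variable {L : AddSubgroup G} {N : AddSubgroup H}

/-- The preimage in `N × G ≤ H × G` of the graph of a homomorphism `φ : N → G ⧸ L`. As in
Goursat's lemma, every subgroup of `H × G` arises in this way from unique `L`, `N` and `φ`. -/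
def graphSubgroup (φ : N →+ G ⧸ L) : AddSubgroup (H × G) where
  carrier := {x | ∃ hx : x.1 ∈ N, φ ⟨x.1, hx⟩ = QuotientAddGroup.mk x.2}
  zero_mem' := ⟨N.zero_mem, φ.map_zero⟩
  add_mem' := by
    rintro x y ⟨hx, hφx⟩ ⟨hy, hφy⟩
    exact ⟨N.add_mem hx hy,
      (φ.map_add ⟨x.1, hx⟩ ⟨y.1, hy⟩).trans (congrArg₂ (· + ·) hφx hφy)⟩
  neg_mem' := by
    rintro x ⟨hx, hφx⟩
    exact ⟨N.neg_mem hx, (φ.map_neg ⟨x.1, hx⟩).trans (congrArg Neg.neg hφx)⟩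

namespace graphSubgroup

theorem coe_prod_mem_iff {φ : N →+ G ⧸ L} {n : N} {g : G} :
    ((n : H), g) ∈ graphSubgroup φ ↔ φ n = QuotientAddGroup.mk g :=
  ⟨fun ⟨_, h⟩ => h, fun h => ⟨n.2, h⟩⟩

theorem comap_inr (φ : N →+ G ⧸ L) :
    (graphSubgroup φ).comap (AddMonoidHom.inr H G) = L := by
  ext g
  have : (0, g) ∈ graphSubgroup φ ↔ φ 0 = QuotientAddGroup.mk g :=
    coe_prod_mem_iff (n := (0 : N))
  rw [AddSubgroup.mem_comap, AddMonoidHom.inr_apply, this, map_zero, eq_comm,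
    QuotientAddGroup.eq_zero_iff]

theorem map_fst (φ : N →+ G ⧸ L) :
    (graphSubgroup φ).map (AddMonoidHom.fst H G) = N := by
  ext h
  constructor
  · rintro ⟨x, ⟨hx, _⟩, rfl⟩
    exact hx
  · intro hh
    obtain ⟨g, hg⟩ := QuotientAddGroup.mk_surjective (φ ⟨h, hh⟩)
    exact ⟨(h, g), ⟨hh, hg.symm⟩, rfl⟩

theorem index (φ : N →+ G ⧸ L) : (graphSubgroup φ).index = L.index * N.index := by
  rw [index_eq_index_comap_inr_mul_index_map_fst, comap_inr, map_fst]

theorem injective :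
    Function.Injective (graphSubgroup : (N →+ G ⧸ L) → AddSubgroup (H × G)) := by
  intro φ ψ h
  ext n
  obtain ⟨g, hg⟩ := QuotientAddGroup.mk_surjective (φ n)
  rw [← hg, eq_comm, ← coe_prod_mem_iff, ← h, coe_prod_mem_iff, hg]

theorem exists_eq (M : AddSubgroup (H × G)) :
    ∃ φ : M.map (AddMonoidHom.fst H G) →+ G ⧸ M.comap (AddMonoidHom.inr H G),
      graphSubgroup φ = M := by
  let π : M →+ M.map (AddMonoidHom.fst H G) := (AddMonoidHom.fst H G).addSubgroupMap M
  have hπ : Function.Surjective π := (AddMonoidHom.fst H G).addSubgroupMap_surjective M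
  let ρ : M →+ G ⧸ M.comap (AddMonoidHom.inr H G) :=
    (QuotientAddGroup.mk' _).comp ((AddMonoidHom.snd H G).comp M.subtype)
  have ker_le : π.ker ≤ ρ.ker := by
    rintro ⟨⟨h, g⟩, hM⟩ hx
    obtain rfl : h = 0 := congrArg Subtype.val hx
    exact (QuotientAddGroup.eq_zero_iff g).2 hM
  let φ := π.liftOfSurjective hπ ⟨ρ, ker_le⟩
  have hφ (x : M) : φ (π x) = ρ x := π.liftOfRightInverse_comp_apply _ _ ⟨ρ, ker_le⟩ x
  refine ⟨φ, le_antisymm ?_ fun x hx => ⟨(π ⟨x, hx⟩).2, hφ ⟨x, hx⟩⟩⟩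
  rintro ⟨h, g⟩ ⟨⟨⟨h', g'⟩, hM, (rfl : h' = h)⟩, hφg⟩
  have mk_eq : (QuotientAddGroup.mk g' : G ⧸ M.comap (AddMonoidHom.inr H G)) =
      QuotientAddGroup.mk g := (hφ ⟨(h', g'), hM⟩).symm.trans hφg
  have sub_mem : (0, -g' + g) ∈ M := QuotientAddGroup.eq.1 mk_eq
  simpa using M.add_mem hM sub_mem

end graphSubgroup

end GraphSubgroup

section SubgroupZeta

/-- The subgroups of `G` whose index is a power of `p`. -/
abbrev PowIndexSubgroup (p : ℕ) (G : Type*) [AddGroup G] : Type _ :=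
  {L : AddSubgroup G // ∃ n, L.index = p ^ n}

/-- The local factor at `p` of the subgroup zeta function of `G`: the sum of `[G : L]⁻ˢ` over the
subgroups `L` whose index is a power of `p`, with values in `ℝ≥0∞` so that no convergence is
needed. -/
noncomputable def subgroupZeta (p : ℕ) (G : Type*) [AddGroup G] (s : ℕ) : ℝ≥0∞ :=
  ∑' L : PowIndexSubgroup p G, ((L.1.index : ℝ≥0∞) ^ s)⁻¹

variable {p : ℕ}

theorem subgroupZeta_congr {G H : Type*} [AddGroup G] [AddGroup H] (e : G ≃+ H) (s : ℕ) :
    subgroupZeta p G s = subgroupZeta p H s := by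
  have index_map (L : AddSubgroup G) : (e.mapAddSubgroup L).index = L.index :=
    AddSubgroup.index_map_equiv L e
  let f : PowIndexSubgroup p G ≃ PowIndexSubgroup p H :=
    e.mapAddSubgroup.toEquiv.subtypeEquiv fun L => by
      simp only [RelIso.coe_fn_toEquiv, index_map]
  unfold subgroupZeta
  rw [← f.tsum_eq]
  exact tsum_congr fun L => by simp only [f, Equiv.subtypeEquiv_apply, RelIso.coe_fn_toEquiv,
    index_map]

theorem subgroupZeta_of_subsingleton {G : Type*} [AddGroup G] [Subsingleton G] (s : ℕ) :
    subgroupZeta p G s = 1 := by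
  let top : PowIndexSubgroup p G := ⟨⊤, 0, by simp⟩
  unfold subgroupZeta
  rw [tsum_eq_single top fun L hL => (hL (Subsingleton.elim _ _)).elim]
  simp [top]

theorem int_eq_zmultiples_index (N : AddSubgroup ℤ) :
    N = AddSubgroup.zmultiples (N.index : ℤ) := by
  obtain ⟨a, rfl⟩ := Int.subgroup_cyclic N
  rw [← AddSubgroup.zmultiples_eq_closure, Int.index_zmultiples, Int.zmultiples_natAbs]

theorem subgroupZeta_int (hp : 1 < p) (s : ℕ) :
    subgroupZeta p ℤ s = (1 - ((p : ℝ≥0∞) ^ s)⁻¹)⁻¹ := by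
  let f (m : ℕ) : PowIndexSubgroup p ℤ :=
    ⟨AddSubgroup.zmultiples ((p ^ m : ℕ) : ℤ), m, by simp [Int.index_zmultiples]⟩
  have index_f (m : ℕ) : (f m).1.index = p ^ m := by simp [f, Int.index_zmultiples]
  have hf : Function.Bijective f := by
    refine ⟨fun m n h => Nat.pow_right_injective hp ?_, fun ⟨N, n, hn⟩ => ⟨n, Subtype.ext ?_⟩⟩
    · simp only [← index_f, h]
    · exact ((int_eq_zmultiples_index N).trans (by rw [hn])).symm
  unfold subgroupZeta
  rw [← (Equiv.ofBijective f hf).tsum_eq, ← ENNReal.tsum_geometric]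
  refine tsum_congr fun m => ?_
  rw [Equiv.ofBijective_apply, index_f, Nat.cast_pow, ← ENNReal.inv_pow, pow_right_comm]

/-- Subgroups of `H × G` of `p`-power index as triples `(L, N, φ : N → G ⧸ L)`. -/
noncomputable def sigmaEquivPowIndexSubgroup (hp : p.Prime) (H G : Type*) [AddCommGroup H]
    [AddCommGroup G] :
    (Σ L : PowIndexSubgroup p G, Σ N : PowIndexSubgroup p H, N.1 →+ G ⧸ L.1) ≃
      PowIndexSubgroup p (H × G) :=
  Equiv.ofBijective
    (fun ⟨L, N, φ⟩ => ⟨graphSubgroup φ, by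
      obtain ⟨⟨m, hm⟩, ⟨n, hn⟩⟩ := And.intro L.2 N.2
      exact ⟨m + n, by rw [graphSubgroup.index, hm, hn, pow_add]⟩⟩) <| by
    constructor
    · rintro ⟨L, N, φ⟩ ⟨L', N', φ'⟩ h
      have h : graphSubgroup φ = graphSubgroup φ' := congrArg Subtype.val h
      obtain rfl : L = L' := Subtype.ext <| by
        rw [← graphSubgroup.comap_inr φ, h, graphSubgroup.comap_inr]
      obtain rfl : N = N' := Subtype.ext <| by
        rw [← graphSubgroup.map_fst φ, h, graphSubgroup.map_fst]
      rw [graphSubgroup.injective h]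
    · rintro ⟨M, n, hn⟩
      have index_mul := index_eq_index_comap_inr_mul_index_map_fst M
      rw [hn] at index_mul
      obtain ⟨i, -, hi⟩ := (Nat.dvd_prime_pow hp).1 (Dvd.intro _ index_mul.symm)
      obtain ⟨j, -, hj⟩ := (Nat.dvd_prime_pow hp).1 (Dvd.intro_left _ index_mul.symm)
      obtain ⟨φ, hφ⟩ := graphSubgroup.exists_eq M
      exact ⟨⟨⟨_, i, hi⟩, ⟨_, j, hj⟩, φ⟩, Subtype.ext hφ⟩

theorem enatCard_addMonoidHom_of_index_ne_zero {N : AddSubgroup ℤ} (hN : N.index ≠ 0)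
    (A : Type*) [AddCommGroup A] : ENat.card (N →+ A) = ENat.card A := by
  obtain ⟨d, rfl⟩ : ∃ d : ℤ, N = (zmultiplesHom ℤ d).range :=
    ⟨_, (int_eq_zmultiples_index N).trans (AddSubgroup.range_zmultiplesHom _).symm⟩
  have hd : d ≠ 0 := by
    rintro rfl
    simp at hN
  have hom_injective : Function.Injective (zmultiplesHom ℤ d) := fun m n h =>
    mul_right_cancel₀ hd h
  exact ENat.card_congr ((zmultiplesAddHom A).trans
    (AddMonoidHom.ofInjective hom_injective).addMonoidHomCongrLeft).toEquiv.symm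

theorem subgroupZeta_int_prod (hp : p.Prime) (G : Type*) [AddCommGroup G] (s : ℕ) :
    subgroupZeta p (ℤ × G) (s + 1) = subgroupZeta p G s * subgroupZeta p ℤ (s + 1) := by
  unfold subgroupZeta
  rw [← (sigmaEquivPowIndexSubgroup hp ℤ G).tsum_eq, ENNReal.tsum_sigma',
    ← ENNReal.tsum_mul_right]
  refine tsum_congr fun L => ?_
  rw [ENNReal.tsum_sigma', ← ENNReal.tsum_mul_left]
  refine tsum_congr fun N => ?_
  obtain ⟨⟨m, hm⟩, ⟨n, hn⟩⟩ := And.intro L.2 N.2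
  have index_L_ne_zero : (L.1.index : ℝ≥0∞) ≠ 0 := by
    exact_mod_cast hm ▸ pow_ne_zero m hp.ne_zero
  have card_hom : (ENat.card (N.1 →+ G ⧸ L.1) : ℝ≥0∞) = L.1.index := by
    have : L.1.FiniteIndex := ⟨hm ▸ pow_ne_zero m hp.ne_zero⟩
    rw [enatCard_addMonoidHom_of_index_ne_zero (hn ▸ pow_ne_zero n hp.ne_zero),
      ENat.card_eq_coe_natCard]
    rfl
  have index_graph (φ : N.1 →+ G ⧸ L.1) :
      (sigmaEquivPowIndexSubgroup hp ℤ G ⟨L, N, φ⟩).1.index = L.1.index * N.1.index :=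
    graphSubgroup.index φ
  simp only [index_graph]
  rw [ENNReal.tsum_const, card_hom, Nat.cast_mul, mul_pow, pow_succ' (L.1.index : ℝ≥0∞), mul_assoc,
    ENNReal.mul_inv (.inl index_L_ne_zero) (.inl (ENNReal.natCast_ne_top _)),
    ENNReal.mul_inv_cancel_left index_L_ne_zero (ENNReal.natCast_ne_top _),
    ENNReal.mul_inv (.inl (pow_ne_zero s index_L_ne_zero))
      (.inl (ENNReal.pow_ne_top (ENNReal.natCast_ne_top _)))]

theorem subgroupZeta_pi_int (hp : p.Prime) (u k : ℕ) :
    subgroupZeta p (Fin k → ℤ) (k + u) =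
      ∏ j ∈ Finset.range k, (1 - ((p : ℝ≥0∞) ^ (j + 1 + u))⁻¹)⁻¹ := by
  induction k with
  | zero => simp [subgroupZeta_of_subsingleton]
  | succ k ih =>
    rw [Finset.prod_range_succ, ← ih, ← subgroupZeta_int hp.one_lt, add_right_comm k 1 u,
      ← subgroupZeta_int_prod hp]
    exact (subgroupZeta_congr
      (Fin.consLinearEquiv ℤ (fun _ : Fin (k + 1) => ℤ)).toAddEquiv _).symm

end SubgroupZeta

section Surjections

variable {G A : Type*} [AddCommGroup G] [AddCommGroup A]

/-- A surjection `G → A` amounts to its kernel `L` together with the induced isomorphism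
`G ⧸ L ≃ A`. -/
noncomputable def sigmaEquivSurjection (G A : Type*) [AddCommGroup G] [AddCommGroup A] :
    (Σ L : {L : AddSubgroup G // Nonempty (G ⧸ L ≃+ A)}, G ⧸ L.1 ≃+ A) ≃
      {f : G →+ A // Function.Surjective f} :=
  Equiv.ofBijective
    (fun ⟨L, e⟩ => ⟨(e : G ⧸ L.1 →+ A).comp (QuotientAddGroup.mk' L.1),
      e.surjective.comp QuotientAddGroup.mk_surjective⟩) <| by
    have ker_comp_mk (L : AddSubgroup G) (e : G ⧸ L ≃+ A) :
        ((e : G ⧸ L →+ A).comp (QuotientAddGroup.mk' L)).ker = L := by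
      ext x
      simp
    constructor
    · rintro ⟨L, e⟩ ⟨L', e'⟩ h
      have h := congrArg Subtype.val h
      obtain rfl : L = L' := Subtype.ext <| by
        rw [← ker_comp_mk L.1 e, ← ker_comp_mk L'.1 e']
        exact congrArg AddMonoidHom.ker h
      obtain rfl : e = e' := by
        ext x
        obtain ⟨g, rfl⟩ := QuotientAddGroup.mk_surjective x
        exact DFunLike.congr_fun h g
      rfl
    · rintro ⟨f, hf⟩
      let e := QuotientAddGroup.quotientKerEquivOfSurjective f hf
      exact ⟨⟨⟨f.ker, ⟨e⟩⟩, e⟩, rfl⟩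

theorem numSur_eq_card_mul_numAut (G A : Type*) [AddCommGroup G] [AddCommGroup A] :
    numSur G A = Nat.card {L : AddSubgroup G // Nonempty (G ⧸ L ≃+ A)} * numAut A := by
  unfold numSur numAut
  rw [← Nat.card_prod, ← Nat.card_congr (sigmaEquivSurjection G A)]
  exact Nat.card_congr ((Equiv.sigmaCongrRight fun L =>
    { toFun := fun e => L.2.some.symm.trans e
      invFun := fun e => L.2.some.trans e
      left_inv := fun e => by ext; simp
      right_inv := fun e => by ext; simp }).trans (Equiv.sigmaEquivProd _ _))

theorem finite_subgroups_quotient_equiv [Finite (G →+ A)] :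
    Finite {L : AddSubgroup G // Nonempty (G ⧸ L ≃+ A)} :=
  .of_surjective (fun f => ((sigmaEquivSurjection G A).symm f).1) fun L =>
    ⟨sigmaEquivSurjection G A ⟨L, L.2.some⟩, by simp⟩

theorem numAut_pos [Finite A] : 0 < numAut A := by
  have : Finite (A ≃+ A) := .of_injective _ DFunLike.coe_injective
  exact Nat.card_pos

theorem numSur_le_card_addMonoidHom [Finite (G →+ A)] : numSur G A ≤ Nat.card (G →+ A) :=
  Nat.card_le_card_of_injective _ Subtype.val_injective

theorem card_addMonoidHom_le_numSur_add_sum [Fintype A] [Finite (G →+ A)] :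
    Nat.card (G →+ A) ≤
      numSur G A + ∑ H : {H : AddSubgroup A // H ≠ ⊤}, Nat.card (G →+ H.1) := by
  have (H : AddSubgroup A) : Finite (G →+ H) :=
    .of_injective H.subtype.comp fun _ _ => (AddMonoidHom.cancel_left H.subtype_injective).1
  rw [numSur, ← Nat.card_sigma, ← Nat.card_sum]
  let incl : {f : G →+ A // Function.Surjective f} ⊕
      (Σ H : {H : AddSubgroup A // H ≠ ⊤}, G →+ H.1) → (G →+ A) :=
    Sum.elim Subtype.val fun x => x.1.1.subtype.comp x.2
  refine Nat.card_le_card_of_surjective incl fun f => ?_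
  by_cases hf : Function.Surjective f
  · exact ⟨.inl ⟨f, hf⟩, rfl⟩
  · have range_ne_top : f.range ≠ ⊤ := fun h => hf (AddMonoidHom.range_eq_top.1 h)
    exact ⟨.inr ⟨⟨f.range, range_ne_top⟩, f.rangeRestrict⟩, rfl⟩

/-- Homomorphisms `ℤᵏ → A` as `k`-tuples of elements of `A`. -/
noncomputable def piEquivAddMonoidHom (k : ℕ) (A : Type*) [AddCommGroup A] :
    (Fin k → A) ≃ ((Fin k → ℤ) →+ A) :=
  ((Pi.basisFun ℤ (Fin k)).constr ℤ).toEquiv.trans (addMonoidHomLequivInt ℤ).symm.toEquiv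

instance (k : ℕ) [Finite A] : Finite ((Fin k → ℤ) →+ A) :=
  .of_equiv _ (piEquivAddMonoidHom k A)

theorem card_pi_int_addMonoidHom (k : ℕ) (A : Type*) [AddCommGroup A] :
    Nat.card ((Fin k → ℤ) →+ A) = Nat.card A ^ k := by
  rw [← Nat.card_congr (piEquivAddMonoidHom k A), Nat.card_fun, Nat.card_fin]

/-- The probability that `k` independent uniformly distributed elements generate `A`. -/
noncomputable def generatingProb (k : ℕ) (A : Type*) [AddCommGroup A] : ℝ≥0∞ :=
  numSur (Fin k → ℤ) A / (Nat.card A : ℝ≥0∞) ^ k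

theorem generatingProb_le_one (k : ℕ) [Finite A] : generatingProb k A ≤ 1 := by
  refine ENNReal.div_le_of_le_mul ?_
  rw [one_mul]
  exact_mod_cast card_pi_int_addMonoidHom k A ▸ numSur_le_card_addMonoidHom

theorem one_le_generatingProb_add_sum (k : ℕ) [Fintype A] :
    1 ≤ generatingProb k A + ∑ H : {H : AddSubgroup A // H ≠ ⊤},
      ((Nat.card H.1 : ℝ≥0∞) / Nat.card A) ^ k := by
  have card_le := card_addMonoidHom_le_numSur_add_sum (G := Fin k → ℤ) (A := A)
  simp only [card_pi_int_addMonoidHom] at card_le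
  have card_ne_zero : (Nat.card A : ℝ≥0∞) ^ k ≠ 0 :=
    pow_ne_zero k (Nat.cast_ne_zero.2 Nat.card_pos.ne')
  have card_ne_top : (Nat.card A : ℝ≥0∞) ^ k ≠ ⊤ := ENNReal.pow_ne_top (ENNReal.natCast_ne_top _)
  simp only [generatingProb, div_eq_mul_inv, mul_pow, ← ENNReal.inv_pow, ← Finset.sum_mul,
    ← add_mul]
  rw [← div_eq_mul_inv, ENNReal.le_div_iff_mul_le (.inl card_ne_zero) (.inl card_ne_top), one_mul]
  exact_mod_cast card_le

theorem tendsto_generatingProb (A : Type*) [AddCommGroup A] [Finite A] :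
    Tendsto (fun k => generatingProb k A) atTop (𝓝 1) := by
  have := Fintype.ofFinite A
  have ratio_lt_one (H : {H : AddSubgroup A // H ≠ ⊤}) :
      (Nat.card H.1 : ℝ≥0∞) / Nat.card A < 1 := by
    refine ENNReal.div_lt_of_lt_mul ?_
    rw [one_mul, Nat.cast_lt]
    exact (AddSubgroup.card_le_card_addGroup H.1).lt_of_ne fun h =>
      H.2 (AddSubgroup.eq_top_of_card_eq _ h)
  have tendsto_error : Tendsto (fun k : ℕ => ∑ H : {H : AddSubgroup A // H ≠ ⊤},
      ((Nat.card H.1 : ℝ≥0∞) / Nat.card A) ^ k) atTop (𝓝 0) := by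
    simpa only [Finset.sum_const_zero] using tendsto_finsetSum Finset.univ fun H _ =>
      ENNReal.tendsto_pow_atTop_nhds_zero_of_lt_one (ratio_lt_one H)
  have tendsto_lower := ENNReal.Tendsto.sub (tendsto_const_nhds (x := (1 : ℝ≥0∞))) tendsto_error
    (.inl ENNReal.one_ne_top)
  rw [tsub_zero] at tendsto_lower
  exact tendsto_of_tendsto_of_tendsto_of_le_of_le tendsto_lower tendsto_const_nhds
    (fun k => tsub_le_iff_right.2 (one_le_generatingProb_add_sum k))
    fun k => generatingProb_le_one k

end Surjections

section Partitions

theorem sum_map_min_add_sum_map_min_add_count (s : Multiset ℕ+) (a : ℕ) :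
    (s.map fun b : ℕ+ => min (b : ℕ) (a + 2)).sum + (s.map fun b : ℕ+ => min (b : ℕ) a).sum +
      s.count a.succPNat = 2 * (s.map fun b : ℕ+ => min (b : ℕ) (a + 1)).sum := by
  induction s using Multiset.induction with
  | empty => simp
  | cons b s ih =>
    have eq_iff : a.succPNat = b ↔ a + 1 = b := by rw [← PNat.coe_inj, Nat.succPNat_coe]
    simp only [Multiset.map_cons, Multiset.sum_cons, Multiset.count_cons, eq_iff]
    split_ifs <;> omega

theorem eq_of_sum_map_min_eq {s t : Multiset ℕ+}
    (h : ∀ a, (s.map fun b : ℕ+ => min (b : ℕ) a).sum = (t.map fun b : ℕ+ => min (b : ℕ) a).sum) :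
    s = t := by
  ext a
  obtain ⟨a, rfl⟩ : ∃ n : ℕ, n.succPNat = a := ⟨a.natPred, a.succPNat_natPred⟩
  have hs := sum_map_min_add_sum_map_min_add_count s a
  have ht := sum_map_min_add_sum_map_min_add_count t a
  simp only [h] at hs
  omega

theorem exists_equiv_of_univ_val_map_eq {ι κ α : Type*} [Fintype ι] [Fintype κ] {f : ι → α}
    {g : κ → α} (h : Finset.univ.val.map f = Finset.univ.val.map g) :
    ∃ σ : ι ≃ κ, ∀ i, g (σ i) = f i := by
  have fiber_equiv (a : α) : Nonempty ({i // f i = a} ≃ {j // g j = a}) := by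
    refine ⟨Fintype.equivOfCardEq ?_⟩
    have count_eq := congrArg (Multiset.count a) h
    simp only [Multiset.count_map, eq_comm (a := a)] at count_eq
    rw [Fintype.card_subtype, Fintype.card_subtype]
    exact count_eq
  exact ⟨Equiv.ofFiberEquiv fun a => (fiber_equiv a).some, Equiv.ofFiberEquiv_map _⟩

end Partitions

theorem card_ker_nsmul_zmod_pow (p : ℕ) [NeZero p] (a j : ℕ) :
    Nat.card (nsmulAddMonoidHom (p ^ j) : ZMod (p ^ a) →+ ZMod (p ^ a)).ker = p ^ min a j := by
  rw [IsAddCyclic.card_nsmulAddMonoidHom_ker, Nat.card_zmod]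
  rcases le_total a j with h | h
  · rw [min_eq_left h, Nat.gcd_eq_left (pow_dvd_pow p h)]
  · rw [min_eq_right h, Nat.gcd_eq_right (pow_dvd_pow p h)]

theorem card_ker_nsmul_pi {ι : Type*} [Fintype ι] (A : ι → Type*) [∀ i, AddCommGroup (A i)]
    (n : ℕ) : Nat.card (nsmulAddMonoidHom n : (∀ i, A i) →+ ∀ i, A i).ker =
      ∏ i, Nat.card (nsmulAddMonoidHom n : A i →+ A i).ker := by
  rw [← Nat.card_pi]
  exact Nat.card_congr
    { toFun := fun x i => ⟨x.1 i, congrFun x.2 i⟩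
      invFun := fun y => ⟨fun i => (y i).1, funext fun i => (y i).2⟩
      left_inv := fun _ => rfl
      right_inv := fun _ => rfl }

theorem card_ker_nsmul_congr {A B : Type*} [AddCommGroup A] [AddCommGroup B] (e : A ≃+ B) (n : ℕ) :
    Nat.card (nsmulAddMonoidHom n : A →+ A).ker = Nat.card (nsmulAddMonoidHom n : B →+ B).ker :=
  Nat.card_congr <| e.toEquiv.subtypeEquiv fun x => by
    simp [AddMonoidHom.mem_ker, ← map_nsmul]

theorem exists_addEquiv_pi_zmod_pow {p : ℕ} (hp : p.Prime) {A : Type*} [AddCommGroup A] {n : ℕ}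
    (hA : Nat.card A = p ^ n) :
    ∃ (ι : Type) (_ : Fintype ι) (a : ι → ℕ+), Nonempty (A ≃+ ∀ i, ZMod (p ^ (a i : ℕ))) := by
  have : Finite A := Nat.finite_of_card_ne_zero (hA ▸ pow_ne_zero n hp.ne_zero)
  obtain ⟨ι, _, m, one_lt_m, ⟨e⟩⟩ := AddCommGroup.equiv_directSum_zmod_of_finite' A
  have e : A ≃+ ∀ i, ZMod (m i) := e.trans (DirectSum.addEquivProd _)
  have prod_m : ∏ i, m i = p ^ n := by
    rw [← hA, Nat.card_congr e.toEquiv, Nat.card_pi]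
    simp only [Nat.card_zmod]
  have m_eq_pow (i : ι) : ∃ a : ℕ+, m i = p ^ (a : ℕ) := by
    obtain ⟨k, -, hk⟩ := (Nat.dvd_prime_pow hp).1
      (prod_m ▸ Finset.dvd_prod_of_mem m (Finset.mem_univ i))
    have k_ne_zero : k ≠ 0 := by
      rintro rfl
      exact (one_lt_m i).ne' (hk.trans (pow_zero p))
    exact ⟨⟨k, Nat.pos_of_ne_zero k_ne_zero⟩, hk⟩
  choose a ha using m_eq_pow
  obtain rfl : m = fun i => p ^ (a i : ℕ) := funext ha
  exact ⟨ι, inferInstance, a, ⟨e⟩⟩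

namespace CLGroup

theorem univ_val_map_toList_get (lam : Multiset ℕ+) :
    (Finset.univ : Finset (Fin lam.toList.length)).val.map lam.toList.get = lam := by
  rw [Fin.univ_val_map, List.ofFn_get, Multiset.coe_toList]

theorem sum_toList_get (lam : Multiset ℕ+) (f : ℕ+ → ℕ) :
    ∑ i, f (lam.toList.get i) = (lam.map f).sum := by
  conv_rhs => rw [← univ_val_map_toList_get lam, Multiset.map_map]
  rfl

instance (p : ℕ) [NeZero p] (lam : Multiset ℕ+) : Finite (CLGroup p lam) :=
  inferInstanceAs (Finite (∀ i : Fin lam.toList.length, ZMod (p ^ (lam.toList.get i : ℕ))))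

theorem card_eq (p : ℕ) (lam : Multiset ℕ+) :
    Nat.card (CLGroup p lam) = p ^ (lam.map fun a : ℕ+ => (a : ℕ)).sum := by
  rw [CLGroup, Nat.card_pi]
  simp only [Nat.card_zmod]
  rw [Finset.prod_pow_eq_pow_sum, sum_toList_get lam fun a => (a : ℕ)]

theorem card_ker_nsmul (p : ℕ) [NeZero p] (lam : Multiset ℕ+) (j : ℕ) :
    Nat.card (nsmulAddMonoidHom (p ^ j) : CLGroup p lam →+ CLGroup p lam).ker =
      p ^ (lam.map fun a : ℕ+ => min (a : ℕ) j).sum := by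
  refine (card_ker_nsmul_pi
    (fun i : Fin lam.toList.length => ZMod (p ^ (lam.toList.get i : ℕ))) (p ^ j)).trans ?_
  simp only [card_ker_nsmul_zmod_pow]
  rw [Finset.prod_pow_eq_pow_sum, sum_toList_get lam fun a => min (a : ℕ) j]

theorem eq_of_addEquiv {p : ℕ} (hp : 1 < p) {lam mu : Multiset ℕ+}
    (e : CLGroup p lam ≃+ CLGroup p mu) : lam = mu := by
  have : NeZero p := ⟨(zero_lt_one.trans hp).ne'⟩
  refine eq_of_sum_map_min_eq fun j => Nat.pow_right_injective hp ?_
  simp only [← card_ker_nsmul, card_ker_nsmul_congr e]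

theorem nonempty_addEquiv_pi_zmod (p : ℕ) {ι : Type*} [Fintype ι] (a : ι → ℕ+) :
    Nonempty ((∀ i, ZMod (p ^ (a i : ℕ))) ≃+ CLGroup p (Finset.univ.val.map a)) := by
  obtain ⟨σ, hσ⟩ := exists_equiv_of_univ_val_map_eq
    (univ_val_map_toList_get (Finset.univ.val.map a))
  let reindex := (RingEquiv.piCongrLeft (fun i => ZMod (p ^ (a i : ℕ))) σ).toAddEquiv
  exact ⟨reindex.symm.trans <| AddEquiv.piCongrRight fun i =>
    (ZMod.ringEquivCongr (by rw [hσ])).toAddEquiv⟩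

theorem exists_addEquiv {p : ℕ} (hp : p.Prime) {A : Type*} [AddCommGroup A] {n : ℕ}
    (hA : Nat.card A = p ^ n) : ∃ lam : Multiset ℕ+, Nonempty (A ≃+ CLGroup p lam) := by
  obtain ⟨ι, _, a, ⟨e⟩⟩ := exists_addEquiv_pi_zmod_pow hp hA
  exact ⟨_, (nonempty_addEquiv_pi_zmod p a).map e.trans⟩

end CLGroup

section Counting

variable {p : ℕ}

/-- Subgroups of `p`-power index sorted by the isomorphism type of their quotient. -/
noncomputable def sigmaQuotientEquivPowIndexSubgroup (hp : p.Prime) (G : Type*)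
    [AddCommGroup G] :
    (Σ lam, {L : AddSubgroup G // Nonempty (G ⧸ L ≃+ CLGroup p lam)}) ≃ PowIndexSubgroup p G :=
  Equiv.ofBijective
    (fun ⟨lam, L⟩ =>
      ⟨L.1, _, (Nat.card_congr L.2.some.toEquiv).trans (CLGroup.card_eq p lam)⟩) <| by
    constructor
    · rintro ⟨lam, L, ⟨e⟩⟩ ⟨mu, L', ⟨e'⟩⟩ h
      obtain rfl : L = L' := congrArg Subtype.val h
      obtain rfl := CLGroup.eq_of_addEquiv hp.one_lt (e.symm.trans e')
      rfl
    · rintro ⟨L, n, hn⟩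
      obtain ⟨lam, h⟩ := CLGroup.exists_addEquiv hp hn
      exact ⟨⟨lam, L, h⟩, rfl⟩

theorem subgroupZeta_eq_tsum_numSur_div_numAut (hp : p.Prime) (G : Type*) [AddCommGroup G]
    [∀ lam, Finite (G →+ CLGroup p lam)] (s : ℕ) :
    subgroupZeta p G s = ∑' lam, (numSur G (CLGroup p lam) : ℝ≥0∞) / numAut (CLGroup p lam) *
      ((Nat.card (CLGroup p lam) : ℝ≥0∞) ^ s)⁻¹ := by
  have : NeZero p := ⟨hp.ne_zero⟩
  unfold subgroupZeta
  rw [← (sigmaQuotientEquivPowIndexSubgroup hp G).tsum_eq, ENNReal.tsum_sigma']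
  refine tsum_congr fun lam => ?_
  have index_eq (L : {L : AddSubgroup G // Nonempty (G ⧸ L ≃+ CLGroup p lam)}) :
      (sigmaQuotientEquivPowIndexSubgroup hp G ⟨lam, L⟩).1.index = Nat.card (CLGroup p lam) :=
    Nat.card_congr L.2.some.toEquiv
  have := finite_subgroups_quotient_equiv (G := G) (A := CLGroup p lam)
  simp only [index_eq]
  rw [ENNReal.tsum_const, ENat.card_eq_coe_natCard, ENat.toENNReal_coe, numSur_eq_card_mul_numAut,
    Nat.cast_mul, ENNReal.mul_div_cancel_right (Nat.cast_ne_zero.2 numAut_pos.ne')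
      (ENNReal.natCast_ne_top _)]

end Counting

theorem tendsto_tsum_of_tendsto_of_le {α ι : Type*} {l : Filter α} {f : α → ι → ℝ≥0∞}
    {g : ι → ℝ≥0∞} (h_le : ∀ a i, f a i ≤ g i)
    (h_tendsto : ∀ i, Tendsto (fun a => f a i) l (𝓝 (g i))) :
    Tendsto (fun a => ∑' i, f a i) l (𝓝 (∑' i, g i)) := by
  refine tendsto_order.2 ⟨fun b hb => ?_, fun b hb =>
    .of_forall fun a => (ENNReal.tsum_le_tsum (h_le a)).trans_lt hb⟩
  rw [ENNReal.tsum_eq_iSup_sum, lt_iSup_iff] at hb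
  obtain ⟨s, hs⟩ := hb
  have tendsto_partial : Tendsto (fun a => ∑ i ∈ s, f a i) l (𝓝 (∑ i ∈ s, g i)) :=
    tendsto_finsetSum s fun i _ => h_tendsto i
  exact (tendsto_partial.eventually_const_lt hs).mono fun a ha =>
    ha.trans_le (ENNReal.sum_le_tsum s)

section EulerProduct

variable {p : ℕ}

theorem clProd_eq_tprod (p u : ℕ) :
    clProd p u = ∏' k : ℕ, (1 + -((p : ℝ) ^ (k + 1 + u))⁻¹) := by
  refine tprod_congr fun k => ?_
  rw [← sub_eq_add_neg, zpow_neg, ← zpow_natCast]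
  push_cast
  rfl

theorem one_sub_inv_pow_pos (hp : 1 < p) {n : ℕ} (hn : n ≠ 0) : 0 < 1 - ((p : ℝ) ^ n)⁻¹ :=
  sub_pos.2 (inv_lt_one_of_one_lt₀ (one_lt_pow₀ (Nat.one_lt_cast.2 hp) hn))

theorem summable_norm_neg_inv_pow (hp : 1 < p) (u : ℕ) :
    Summable fun k : ℕ => ‖-((p : ℝ) ^ (k + 1 + u))⁻¹‖ := by
  have := (summable_geometric_of_lt_one (inv_nonneg.2 p.cast_nonneg)
    (inv_lt_one_of_one_lt₀ (Nat.one_lt_cast.2 hp : (1 : ℝ) < p))).comp_injective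
      (add_left_injective (1 + u))
  refine this.congr fun k => ?_
  rw [Function.comp_apply, norm_neg, Real.norm_of_nonneg (by positivity), inv_pow, add_assoc]

theorem tendsto_prod_range_clProd (hp : 1 < p) (u : ℕ) :
    Tendsto (fun k => ∏ j ∈ Finset.range k, (1 - ((p : ℝ) ^ (j + 1 + u))⁻¹)) atTop
      (𝓝 (clProd p u)) := by
  simp only [clProd_eq_tprod, sub_eq_add_neg]
  exact (multipliable_one_add_of_summable
    (summable_norm_neg_inv_pow hp u)).hasProd.tendsto_prod_nat

theorem clProd_ne_zero (hp : 1 < p) (u : ℕ) : clProd p u ≠ 0 := by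
  rw [clProd_eq_tprod]
  refine tprod_one_add_ne_zero_of_summable (fun k => ?_) (summable_norm_neg_inv_pow hp u)
  rw [← sub_eq_add_neg]
  exact (one_sub_inv_pow_pos hp (by omega)).ne'

theorem clProd_nonneg (hp : 1 < p) (u : ℕ) : 0 ≤ clProd p u :=
  ge_of_tendsto' (tendsto_prod_range_clProd hp u) fun _ =>
    Finset.prod_nonneg fun _ _ => (one_sub_inv_pow_pos hp (by omega)).le

theorem tendsto_subgroupZeta_pi_int (hp : p.Prime) (u : ℕ) :
    Tendsto (fun k => subgroupZeta p (Fin k → ℤ) (k + u)) atTop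
      (𝓝 (ENNReal.ofReal (clProd p u)⁻¹)) := by
  have zeta_eq (k : ℕ) : subgroupZeta p (Fin k → ℤ) (k + u) =
      ENNReal.ofReal (∏ j ∈ Finset.range k, (1 - ((p : ℝ) ^ (j + 1 + u))⁻¹))⁻¹ := by
    have factor_pos (j : ℕ) := one_sub_inv_pow_pos hp.one_lt (n := j + 1 + u) (by omega)
    rw [subgroupZeta_pi_int hp, ← Finset.prod_inv_distrib,
      ENNReal.ofReal_prod_of_nonneg fun j _ => inv_nonneg.2 (factor_pos j).le]
    refine Finset.prod_congr rfl fun j _ => ?_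
    rw [ENNReal.ofReal_inv_of_pos (factor_pos j), ENNReal.ofReal_sub _ (by positivity),
      ENNReal.ofReal_one, ENNReal.ofReal_inv_of_pos (by have := hp.pos; positivity),
      ENNReal.ofReal_pow p.cast_nonneg, ENNReal.ofReal_natCast]
  simp only [zeta_eq]
  exact ENNReal.tendsto_ofReal ((tendsto_prod_range_clProd hp.one_lt u).inv₀
    (clProd_ne_zero hp.one_lt u))

end EulerProduct

section CohenLenstraWeight

variable {p : ℕ}

/-- The Cohen–Lenstra measure without its normalizing constant `clProd p u`, with values in `ℝ≥0∞`
so that it can be summed before convergence is known. -/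
noncomputable def clWeight (u : ℕ) (A : Type*) [AddCommGroup A] : ℝ≥0∞ :=
  ((Nat.card A : ℝ≥0∞) ^ u)⁻¹ * (numAut A : ℝ≥0∞)⁻¹

theorem clWeight_ne_top (u : ℕ) (A : Type*) [AddCommGroup A] [Finite A] : clWeight u A ≠ ⊤ :=
  ENNReal.mul_ne_top
    (ENNReal.inv_ne_top.2 (pow_ne_zero u (Nat.cast_ne_zero.2 Nat.card_pos.ne')))
    (ENNReal.inv_ne_top.2 (Nat.cast_ne_zero.2 numAut_pos.ne'))

theorem clMeasure_eq_toReal_clWeight_mul (p u : ℕ) (A : Type*) [AddCommGroup A] :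
    clMeasure p u A = (clWeight u A).toReal * clProd p u := by
  simp only [clMeasure, clWeight, ENNReal.toReal_mul, ENNReal.toReal_inv, ENNReal.toReal_pow,
    ENNReal.toReal_natCast]

theorem subgroupZeta_pi_int_eq_tsum_clWeight_mul (hp : p.Prime) (u k : ℕ) :
    subgroupZeta p (Fin k → ℤ) (k + u) =
      ∑' lam, clWeight u (CLGroup p lam) * generatingProb k (CLGroup p lam) := by
  have : NeZero p := ⟨hp.ne_zero⟩
  rw [subgroupZeta_eq_tsum_numSur_div_numAut hp]
  refine tsum_congr fun lam => ?_
  have card_ne_zero : (Nat.card (CLGroup p lam) : ℝ≥0∞) ≠ 0 :=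
    Nat.cast_ne_zero.2 Nat.card_pos.ne'
  rw [clWeight, generatingProb, pow_add, ENNReal.mul_inv (.inl (pow_ne_zero k card_ne_zero))
    (.inr (pow_ne_zero u card_ne_zero)), div_eq_mul_inv, div_eq_mul_inv]
  ring

theorem tsum_clWeight (hp : p.Prime) (u : ℕ) :
    ∑' lam, clWeight u (CLGroup p lam) = ENNReal.ofReal (clProd p u)⁻¹ := by
  have : NeZero p := ⟨hp.ne_zero⟩
  have tendsto_tsum : Tendsto (fun k => ∑' lam, clWeight u (CLGroup p lam) *
      generatingProb k (CLGroup p lam)) atTop (𝓝 (∑' lam, clWeight u (CLGroup p lam))) := by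
    refine tendsto_tsum_of_tendsto_of_le
      (fun k lam => mul_le_of_le_one_right' (generatingProb_le_one k)) fun lam => ?_
    simpa only [mul_one] using ENNReal.Tendsto.const_mul
      (tendsto_generatingProb (CLGroup p lam)) (.inl one_ne_zero)
  simp only [← subgroupZeta_pi_int_eq_tsum_clWeight_mul hp] at tendsto_tsum
  exact tendsto_nhds_unique tendsto_tsum (tendsto_subgroupZeta_pi_int hp u)

end CohenLenstraWeight

theorem cl_measure_prob_general (p : ℕ) (hp : p.Prime) (u : ℕ) :
    HasSum (fun lam : Multiset ℕ+ => clMeasure p u (CLGroup p lam)) 1 := by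
  have : NeZero p := ⟨hp.ne_zero⟩
  have tsum_ne_top : ∑' lam, clWeight u (CLGroup p lam) ≠ ⊤ :=
    tsum_clWeight hp u ▸ ENNReal.ofReal_ne_top
  have tsum_toReal : ∑' lam, (clWeight u (CLGroup p lam)).toReal = (clProd p u)⁻¹ := by
    rw [← ENNReal.tsum_toReal_eq fun lam => clWeight_ne_top u (CLGroup p lam), tsum_clWeight hp,
      ENNReal.toReal_ofReal (inv_nonneg.2 (clProd_nonneg hp.one_lt u))]
  have hasSum_weight := ENNReal.hasSum_toReal tsum_ne_top
  rw [tsum_toReal] at hasSum_weight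
  simpa only [clMeasure_eq_toReal_clWeight_mul, inv_mul_cancel₀ (clProd_ne_zero hp.one_lt u)]
    using hasSum_weight.mul_right (clProd p u)

/-- The Cohen–Lenstra measure `μ^u` is a probability measure: the sum over isomorphism
classes of finite abelian `p`-groups `A` of `μ^u(A)` equals `1`. -/
theorem cl_measure_prob (p : ℕ) (hp : p.Prime) (hodd : Odd p) (u : ℕ) :
    ∑' lam : Multiset ℕ+, clMeasure p u (CLGroup p lam) = 1 :=
  (cl_measure_prob_general p hp u).tsum_eq
end
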